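/- Let g be a semisimple Lie algebra over an algebraically closed field of characteristic zero with center Z(g) ⊆ U(g) of the universal enveloping algebra. Then U(g) is free (in particular flat) as a module over Z(g). -/

import Mathlib

/-!
Let `𝔥` be a splitting Cartan subalgebra and `W` the reflection group of its root system.
By Chevalley, `Sym 𝔥` is free over `(Sym 𝔥)ᵂ` with a basis of monomials: divided differences show
that monomials which are independent modulo the ideal generated by the homogeneous invariants of
positive degree stay independent over the invariants.

Restriction, which sets the root vectors to zero, maps `(Sym L)ᴸ` isomorphically onto `(Sym 𝔥)ᵂ`. To
lift a `W`-invariant, one adds corrections of increasing degree in the root vectors; the condition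
that the root vector of `-α` annihilates the lift determines each correction by a division by the
coroot of `α`, and `W`-invariance together with the commutation of the operators involved makes the
division possible. Symmetrization `Sym L → U(L)` is equivariant, and it is bijective (faithfulness
of the adjoint representation gives injectivity), so it carries `(Sym L)ᴸ` onto the center.

Give the root vectors a smaller weight than the elements of `𝔥`. Then the leading term of an element
of `(Sym L)ᴸ` lies in `Sym 𝔥`, and `U(L)` is commutative up to terms of smaller weight. Comparing
leading terms, the monomials in the root vectors times the Chevalley basis form a basis of `U(L)`
over the center.
-/

namespace KostantFreeness

open MvPolynomial

/-! ### Linear forms, reflections and divided differences -/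

section Homogeneous

variable {σ R : Type*} [CommRing R] {p : MvPolynomial σ R} {a : ℕ}

lemma homogeneousComponent_mul (hp : p.IsHomogeneous a) (q : MvPolynomial σ R) (n : ℕ) :
    homogeneousComponent n (p * q) = if a ≤ n then p * homogeneousComponent (n - a) q else 0 := by
  have hterm (i : ℕ) : homogeneousComponent n (p * homogeneousComponent i q) =
      if n = a + i then p * homogeneousComponent i q else 0 :=
    homogeneousComponent_of_mem (hp.mul (homogeneousComponent_isHomogeneous i q))
  conv_lhs => rw [← sum_homogeneousComponent q, Finset.mul_sum, map_sum]
  simp only [hterm]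
  split_ifs with han
  · rw [Finset.sum_eq_single (n - a), if_pos (by omega)]
    · exact fun i _ hi => if_neg (by omega)
    · intro hn
      rw [homogeneousComponent_eq_zero (n - a) q (by
        rw [Finset.mem_range] at hn; omega), mul_zero, ite_self]
  · exact Finset.sum_eq_zero fun i _ => if_neg (by omega)

lemma isHomogeneous_of_mul_left [IsDomain R] {q : MvPolynomial σ R} {b : ℕ}
    (hp : p.IsHomogeneous a) (hp0 : p ≠ 0) (hpq : (p * q).IsHomogeneous (a + b)) :
    q.IsHomogeneous b := by
  have hcomp : p * q = p * homogeneousComponent b q := by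
    rw [← homogeneousComponent_eq_self hpq, homogeneousComponent_mul hp, if_pos (by omega),
      add_tsub_cancel_left]
  rw [mul_left_cancel₀ hp0 hcomp]
  exact homogeneousComponent_isHomogeneous b q

end Homogeneous

section LinearForm

variable {ι k : Type*} [Fintype ι] [CommSemiring k]

/-- The linear form `∑ i, v i * X i` with coefficient vector `v`. -/
noncomputable def linearForm : (ι → k) →ₗ[k] MvPolynomial ι k :=
  Fintype.linearCombination k X

lemma linearForm_apply (v : ι → k) : linearForm v = ∑ i, C (v i) * X i := by
  simp only [linearForm, Fintype.linearCombination_apply, smul_eq_C_mul]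

lemma linearForm_isHomogeneous (v : ι → k) : (linearForm v).IsHomogeneous 1 := by
  rw [linearForm_apply]
  exact IsHomogeneous.sum _ _ _ fun i _ => isHomogeneous_C_mul_X (v i) i

lemma linearForm_ne_zero {v : ι → k} (hv : v ≠ 0) : linearForm v ≠ 0 := by
  classical
  obtain ⟨i, hi⟩ := Function.ne_iff.mp hv
  refine ne_zero_iff.mpr ⟨Finsupp.single i 1, ?_⟩
  simpa [linearForm_apply, coeff_sum, coeff_C_mul, coeff_X, Finsupp.single_left_inj] using hi

lemma linearForm_single [DecidableEq ι] (i : ι) : linearForm (Pi.single i 1 : ι → k) = X i := by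
  simp [linearForm]

end LinearForm

section Reflection

variable {ι k : Type*} [Fintype ι] [CommRing k]

/-- The action on polynomials of the substitution `x ↦ x - f(x) v`. It is a reflection when
`f ⬝ᵥ v = 2`. -/
noncomputable def reflection (f v : ι → k) : MvPolynomial ι k →ₐ[k] MvPolynomial ι k :=
  aeval fun i => X i - C (f i) * linearForm v

lemma reflection_X (f v : ι → k) (i : ι) :
    reflection f v (X i) = X i - C (f i) * linearForm v := by
  simp [reflection]

lemma reflection_linearForm (f v w : ι → k) :
    reflection f v (linearForm w) = linearForm w - C (f ⬝ᵥ w) * linearForm v := by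
  simp only [linearForm_apply w, map_sum, map_mul, algHom_C, algebraMap_eq, reflection_X, mul_sub,
    Finset.sum_sub_distrib, dotProduct, Finset.sum_mul]
  congr 1
  exact Finset.sum_congr rfl fun i _ => by ring

lemma reflection_isHomogeneous (f v : ι → k) {q : MvPolynomial ι k} {n : ℕ}
    (hq : q.IsHomogeneous n) : (reflection f v q).IsHomogeneous n := by
  have := hq.aeval (fun i => X i - C (f i) * linearForm v) fun i =>
    (isHomogeneous_X k i).sub ((linearForm_isHomogeneous v).C_mul (f i))
  rwa [one_mul] at this

variable {f v : ι → k}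

lemma reflection_linearForm_self (hfv : f ⬝ᵥ v = 2) :
    reflection f v (linearForm v) = -linearForm v := by
  rw [reflection_linearForm, hfv, show (C 2 : MvPolynomial ι k) = 2 from map_ofNat C 2]
  ring

lemma reflection_reflection (hfv : f ⬝ᵥ v = 2) (q : MvPolynomial ι k) :
    reflection f v (reflection f v q) = q := by
  have hcomp : (reflection f v).comp (reflection f v) = AlgHom.id k _ := by
    ext1 i
    simp only [AlgHom.comp_apply, reflection_X, map_sub, map_mul, algHom_C, algebraMap_eq,
      reflection_linearForm_self hfv, AlgHom.id_apply]
    ring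
  exact DFunLike.congr_fun hcomp q

variable (f v) in
lemma linearForm_dvd_sub_reflection (q : MvPolynomial ι k) :
    linearForm v ∣ q - reflection f v q := by
  have hcomp : (Ideal.Quotient.mkₐ k (Ideal.span {linearForm v})).comp (reflection f v) =
      Ideal.Quotient.mkₐ k (Ideal.span {linearForm v}) := by
    ext1 i
    simp only [AlgHom.comp_apply, reflection_X, map_sub, map_mul, sub_eq_self,
      Ideal.Quotient.mkₐ_eq_mk]
    rw [Ideal.Quotient.mk_singleton_self, mul_zero]
  rw [← Ideal.mem_span_singleton, ← Ideal.Quotient.mk_eq_mk_iff_sub_mem]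
  exact (DFunLike.congr_fun hcomp q).symm

lemma ne_zero_of_dotProduct_eq_two [NeZero (2 : k)] (hfv : f ⬝ᵥ v = 2) : v ≠ 0 := by
  rintro rfl
  exact two_ne_zero (hfv.symm.trans (dotProduct_zero f))

end Reflection

section Derivation

variable {k ι : Type*}

/-- The derivative in the direction `f`. -/
noncomputable def dirDeriv [CommSemiring k] (f : ι → k) :
    Derivation k (MvPolynomial ι k) (MvPolynomial ι k) :=
  mkDerivation k fun i => C (f i)

lemma dirDeriv_X [CommSemiring k] (f : ι → k) (i : ι) : dirDeriv f (X i) = C (f i) :=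
  mkDerivation_X k _ i

variable [Fintype ι]

lemma dirDeriv_linearForm [CommSemiring k] (f v : ι → k) :
    dirDeriv f (linearForm v) = C (f ⬝ᵥ v) := by
  simp only [linearForm, Fintype.linearCombination_apply, map_sum, Derivation.map_smul, dirDeriv_X,
    dotProduct]
  exact Finset.sum_congr rfl fun i _ => by rw [smul_eq_C_mul, ← C_mul, mul_comm]

variable [Field k] {f v : ι → k}

lemma dirDeriv_linearForm_pow_mul (n : ℕ) (g : MvPolynomial ι k) :
    dirDeriv f (linearForm v ^ (n + 1) * g) =
      linearForm v ^ n * (C ((n + 1) * (f ⬝ᵥ v)) * g + linearForm v * dirDeriv f g) := by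
  simp only [Derivation.leibniz, Derivation.leibniz_pow, dirDeriv_linearForm, smul_eq_mul,
    nsmul_eq_mul, C_mul, C_add, C_1, map_natCast, add_tsub_cancel_right, Nat.cast_add, Nat.cast_one]
  ring

lemma linearForm_dvd_of_reflection_eq_neg [NeZero (2 : k)] {r : MvPolynomial ι k}
    (hr : reflection f v r = -r) : linearForm v ∣ r := by
  have h2r : linearForm v ∣ C 2 * r := by
    have := linearForm_dvd_sub_reflection f v r
    rwa [hr, sub_neg_eq_add, ← two_mul, ← map_ofNat C 2] at this
  exact ((isUnit_iff_ne_zero.mpr (two_ne_zero (α := k))).map C).dvd_mul_left.mp h2r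

lemma linearForm_pow_dvd_of_dirDeriv_eq_zero [CharZero k] (hfv : f ⬝ᵥ v = 2)
    {r : MvPolynomial ι k} (hr : reflection f v r = -r) (hd : dirDeriv f r = 0) (n : ℕ) :
    linearForm v ^ (n + 1) ∣ r := by
  induction n with
  | zero => simpa using linearForm_dvd_of_reflection_eq_neg hr
  | succ n ih =>
    obtain ⟨g, rfl⟩ := ih
    have hv := linearForm_ne_zero (ne_zero_of_dotProduct_eq_two hfv)
    rw [dirDeriv_linearForm_pow_mul, hfv, mul_eq_zero, or_iff_right (pow_ne_zero _ hv)] at hd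
    have hunit : IsUnit (C ((n + 1) * 2 : k) : MvPolynomial ι k) :=
      (isUnit_iff_ne_zero.mpr (mul_ne_zero n.cast_add_one_ne_zero two_ne_zero)).map C
    rw [pow_succ]
    refine mul_dvd_mul_left _ (hunit.dvd_mul_left.mp ⟨-dirDeriv f g, ?_⟩)
    linear_combination hd

lemma eq_zero_of_reflection_eq_neg [CharZero k] (hfv : f ⬝ᵥ v = 2) {r : MvPolynomial ι k}
    (hr : reflection f v r = -r) (hd : dirDeriv f r = 0) : r = 0 := by
  have hv := linearForm_ne_zero (ne_zero_of_dotProduct_eq_two hfv)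
  obtain ⟨g, hg⟩ := linearForm_pow_dvd_of_dirDeriv_eq_zero hfv hr hd r.totalDegree
  by_contra hr0
  have hg0 : g ≠ 0 := by
    rintro rfl
    exact hr0 (by rw [hg, mul_zero])
  have hdeg := congrArg totalDegree hg
  rw [totalDegree_mul_of_isDomain (pow_ne_zero _ hv) hg0,
    ((linearForm_isHomogeneous v).pow _).totalDegree (pow_ne_zero _ hv)] at hdeg
  omega

lemma reflection_dirDeriv (hfv : f ⬝ᵥ v = 2) (q : MvPolynomial ι k) :
    reflection f v (dirDeriv f q) = -dirDeriv f (reflection f v q) := by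
  have hC (a : k) : reflection f v (C a) = C a := algHom_C _ a
  induction q using MvPolynomial.induction_on with
  | C a => rw [hC, ← algebraMap_eq k ι, Derivation.map_algebraMap, map_zero, neg_zero]
  | add p q hp hq => simp only [map_add, hp, hq, neg_add]
  | mul_X p i hp =>
    have hX : dirDeriv f (reflection f v (X i)) = -C (f i) := by
      rw [reflection_X, map_sub, dirDeriv_X, ← smul_eq_C_mul, Derivation.map_smul,
        dirDeriv_linearForm, hfv, smul_eq_C_mul, show (C 2 : MvPolynomial ι k) = 2 from
        map_ofNat C 2]
      ring
    simp only [map_mul, Derivation.leibniz, smul_eq_mul, map_add, hp, hX, dirDeriv_X, hC]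
    ring

end Derivation

/-! ### Chevalley's freeness theorem for finite reflection groups -/

section Invariants

variable {k ι Φ : Type*} [Fintype ι]

/-- The subalgebra of polynomials invariant under all the reflections `x ↦ x - rt α (x) ct α`. -/
noncomputable def invariants [CommRing k] (rt ct : Φ → ι → k) :
    Subalgebra k (MvPolynomial ι k) where
  carrier := {q | ∀ α, reflection (rt α) (ct α) q = q}
  mul_mem' ha hb α := by rw [map_mul, ha α, hb α]
  add_mem' ha hb α := by rw [map_add, ha α, hb α]
  algebraMap_mem' c α := AlgHom.commutes _ c

/-- The ideal generated by the homogeneous invariants of positive degree. -/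
noncomputable def hilbertIdeal [CommRing k] (rt ct : Φ → ι → k) : Ideal (MvPolynomial ι k) :=
  Ideal.span {r | r ∈ invariants rt ct ∧ ∃ a > 0, r.IsHomogeneous a}

/-- The monoid generated by the reflections; it is the reflection group, since the reflections
are involutions. -/
noncomputable def reflectionMonoid [CommRing k] (rt ct : Φ → ι → k) :
    Submonoid (MvPolynomial ι k →ₐ[k] MvPolynomial ι k) :=
  Submonoid.closure (Set.range fun α => reflection (rt α) (ct α))

section CommRing

variable [CommRing k] {rt ct : Φ → ι → k}

lemma reflection_mem_hilbertIdeal (α : Φ) {p : MvPolynomial ι k} (hp : p ∈ hilbertIdeal rt ct) :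
    reflection (rt α) (ct α) p ∈ hilbertIdeal rt ct := by
  have hle : hilbertIdeal rt ct ≤
      (hilbertIdeal rt ct).comap (reflection (rt α) (ct α)).toRingHom := by
    refine Ideal.span_le.mpr fun r hr => ?_
    have hrα : reflection (rt α) (ct α) r = r := hr.1 α
    exact Ideal.mem_comap.mpr (hrα.symm ▸ Ideal.subset_span hr)
  exact hle hp

lemma homogeneousComponent_mem_of_mem_hilbertIdeal {q : MvPolynomial ι k}
    (hq : q ∈ hilbertIdeal rt ct) (d : ℕ) :
    homogeneousComponent d q ∈ Submodule.span k {p | ∃ a > 0, ∃ b, a + b = d ∧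
      ∃ r ∈ invariants rt ct, r.IsHomogeneous a ∧ ∃ s, s.IsHomogeneous b ∧ p = r * s} := by
  obtain ⟨n, s, r, rfl⟩ := Submodule.mem_span_set'.mp hq
  rw [map_sum]
  refine sum_mem fun i _ => ?_
  obtain ⟨hr, a, ha, hra⟩ := (r i).2
  rw [smul_eq_mul, mul_comm, homogeneousComponent_mul hra]
  split_ifs with had
  · exact Submodule.subset_span ⟨a, ha, d - a, Nat.add_sub_cancel' had, _, hr, hra, _,
      homogeneousComponent_isHomogeneous _ _, rfl⟩
  · exact zero_mem _

lemma reflectionMonoid_isHomogeneous {g : MvPolynomial ι k →ₐ[k] MvPolynomial ι k}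
    (hg : g ∈ reflectionMonoid rt ct) {q : MvPolynomial ι k} {d : ℕ} (hq : q.IsHomogeneous d) :
    (g q).IsHomogeneous d := by
  induction hg using Submonoid.closure_induction_left with
  | one => exact hq
  | mul_left x hx y _ ih =>
    obtain ⟨α, rfl⟩ := hx
    rw [AlgHom.mul_apply]
    exact reflection_isHomogeneous _ _ ih

lemma sub_mem_hilbertIdeal_of_mem_reflectionMonoid {q : MvPolynomial ι k}
    (hq : ∀ α, q - reflection (rt α) (ct α) q ∈ hilbertIdeal rt ct)
    {g : MvPolynomial ι k →ₐ[k] MvPolynomial ι k} (hg : g ∈ reflectionMonoid rt ct) :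
    q - g q ∈ hilbertIdeal rt ct := by
  induction hg using Submonoid.closure_induction_left with
  | one => simp
  | mul_left x hx y _ ih =>
    obtain ⟨α, rfl⟩ := hx
    have := add_mem (hq α) (reflection_mem_hilbertIdeal α ih)
    rwa [map_sub, sub_add_sub_cancel] at this

lemma sum_reflectionMonoid_mem_invariants [Fintype (reflectionMonoid rt ct)]
    (h2 : ∀ α, rt α ⬝ᵥ ct α = 2) (q : MvPolynomial ι k) :
    ∑ g : reflectionMonoid rt ct, g.1 q ∈ invariants rt ct := by
  intro α
  rw [map_sum]
  let s : reflectionMonoid rt ct :=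
    ⟨reflection (rt α) (ct α), Submonoid.subset_closure ⟨α, rfl⟩⟩
  have hs : Function.Involutive (s * ·) := fun g =>
    Subtype.ext (AlgHom.ext fun p => reflection_reflection (h2 α) (g.1 p))
  exact Fintype.sum_bijective _ hs.bijective _ _ fun g => rfl

end CommRing

variable [Field k] {rt ct : Φ → ι → k}

lemma finite_reflectionMonoid [Finite Φ] (σ : Φ → Φ → Φ)
    (hσ : ∀ α β, ct β - (rt α ⬝ᵥ ct β) • ct α = ct (σ α β))
    (hspan : Submodule.span k (Set.range ct) = ⊤) : Finite (reflectionMonoid rt ct) := by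
  have hperm (g : reflectionMonoid rt ct) :
      ∃ τ : Φ → Φ, ∀ β, g.1 (linearForm (ct β)) = linearForm (ct (τ β)) := by
    obtain ⟨g, hg⟩ := g
    induction hg using Submonoid.closure_induction_left with
    | one => exact ⟨id, fun β => rfl⟩
    | mul_left x hx y _ ih =>
      obtain ⟨α, rfl⟩ := hx
      obtain ⟨τ, hτ⟩ := ih
      refine ⟨σ α ∘ τ, fun β => ?_⟩
      rw [AlgHom.mul_apply, hτ, reflection_linearForm, ← smul_eq_C_mul, ← map_smul, ← map_sub, hσ,
        Function.comp_apply]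
  choose τ hτ using hperm
  refine Finite.of_injective τ fun g g' hgg' => Subtype.ext (algHom_ext fun i => ?_)
  have hlin : g.1.toLinearMap ∘ₗ linearForm = g'.1.toLinearMap ∘ₗ linearForm :=
    LinearMap.ext_on_range hspan fun β => by
      simp only [LinearMap.comp_apply, AlgHom.toLinearMap_apply, hτ, hgg']
  classical
  rw [← linearForm_single]
  exact LinearMap.congr_fun hlin _

lemma exists_dividedDifference [NeZero (2 : k)] {α : Φ} (hα : rt α ⬝ᵥ ct α = 2) :
    ∃ D : MvPolynomial ι k →ₗ[invariants rt ct] MvPolynomial ι k,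
      ∀ q, linearForm (ct α) * D q = q - reflection (rt α) (ct α) q := by
  have hv := linearForm_ne_zero (ne_zero_of_dotProduct_eq_two hα)
  choose D hD using linearForm_dvd_sub_reflection (rt α) (ct α)
  refine ⟨⟨⟨D, fun p q => mul_left_cancel₀ hv ?_⟩, fun r q => mul_left_cancel₀ hv ?_⟩,
    fun q => (hD q).symm⟩
  · rw [mul_add, ← hD, ← hD, ← hD, map_add]
    ring
  · have hr : reflection (rt α) (ct α) (r : MvPolynomial ι k) = r := r.2 α
    change linearForm (ct α) * D ((r : MvPolynomial ι k) * q) = linearForm (ct α) * (r * D q)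
    rw [← hD, map_mul, hr]
    linear_combination (r : MvPolynomial ι k) * hD q

variable [CharZero k]

lemma mem_hilbertIdeal_of_forall_sub_mem [Finite (reflectionMonoid rt ct)]
    (h2 : ∀ α, rt α ⬝ᵥ ct α = 2) {d : ℕ} (hd : 0 < d) {q : MvPolynomial ι k}
    (hq : q.IsHomogeneous d) (h : ∀ α, q - reflection (rt α) (ct α) q ∈ hilbertIdeal rt ct) :
    q ∈ hilbertIdeal rt ct := by
  have := Fintype.ofFinite (reflectionMonoid rt ct)
  have hsum : ∑ g : reflectionMonoid rt ct, g.1 q ∈ hilbertIdeal rt ct :=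
    Ideal.subset_span ⟨sum_reflectionMonoid_mem_invariants h2 q, d, hd,
      IsHomogeneous.sum _ _ _ fun g _ => reflectionMonoid_isHomogeneous g.2 hq⟩
  have hdiff : ∑ g : reflectionMonoid rt ct, (q - g.1 q) ∈ hilbertIdeal rt ct :=
    sum_mem fun g _ => sub_mem_hilbertIdeal_of_mem_reflectionMonoid h g.2
  have hcard := add_mem hdiff hsum
  rw [← Finset.sum_add_distrib] at hcard
  simp only [sub_add_cancel, Finset.sum_const, Finset.card_univ, nsmul_eq_mul] at hcard
  have hunit : IsUnit ((Fintype.card (reflectionMonoid rt ct) : k)) :=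
    isUnit_iff_ne_zero.mpr (Nat.cast_ne_zero.mpr Fintype.card_ne_zero)
  rwa [← map_natCast (C : k →+* MvPolynomial ι k), Ideal.unit_mul_mem_iff_mem _ (hunit.map C)]
    at hcard

lemma exists_linearMap_eq_C_of_notMem_hilbertIdeal [Finite (reflectionMonoid rt ct)]
    (h2 : ∀ α, rt α ⬝ᵥ ct α = 2) {d : ℕ} {q : MvPolynomial ι k} (hq : q.IsHomogeneous d)
    (hqI : q ∉ hilbertIdeal rt ct) :
    ∃ T : MvPolynomial ι k →ₗ[invariants rt ct] MvPolynomial ι k,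
      (∀ n < d, ∀ p : MvPolynomial ι k, p.IsHomogeneous n → T p = 0) ∧
      (∀ p : MvPolynomial ι k, p.IsHomogeneous d → ∃ c, T p = C c) ∧ T q ≠ 0 := by
  induction d generalizing q with
  | zero =>
    refine ⟨LinearMap.id, by simp, fun p hp => ⟨coeff 0 p, ?_⟩, fun hq0 : q = 0 => ?_⟩
    · exact totalDegree_eq_zero_iff_eq_C.mp ((totalDegree_zero_iff_isHomogeneous _).mpr hp)
    · exact hqI (hq0 ▸ zero_mem _)
  | succ d ih =>
    obtain ⟨α, hα⟩ : ∃ α, q - reflection (rt α) (ct α) q ∉ hilbertIdeal rt ct := by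
      by_contra! hall
      exact hqI (mem_hilbertIdeal_of_forall_sub_mem h2 d.succ_pos hq hall)
    have hv := linearForm_ne_zero (ne_zero_of_dotProduct_eq_two (h2 α))
    obtain ⟨D, hD⟩ := exists_dividedDifference (h2 α)
    have hD_homog {p : MvPolynomial ι k} {n : ℕ} (hp : p.IsHomogeneous (n + 1)) :
        (D p).IsHomogeneous n := by
      refine isHomogeneous_of_mul_left (linearForm_isHomogeneous _) hv ?_
      rw [hD, add_comm]
      exact hp.sub (reflection_isHomogeneous _ _ hp)
    have hDq : D q ∉ hilbertIdeal rt ct := fun h => hα (hD q ▸ Ideal.mul_mem_left _ _ h)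
    obtain ⟨T, hT_lt, hT_eq, hTq⟩ := ih (hD_homog hq) hDq
    refine ⟨T ∘ₗ D, fun n hn p hp => ?_, fun p hp => hT_eq _ (hD_homog hp), hTq⟩
    rcases n with - | n
    · have hpC := totalDegree_eq_zero_iff_eq_C.mp ((totalDegree_zero_iff_isHomogeneous _).mpr hp)
      have hDp : D p = 0 := by
        apply mul_left_cancel₀ hv
        rw [hD, mul_zero, hpC, sub_eq_zero]
        exact (algHom_C _ _).symm
      rw [LinearMap.comp_apply, hDp, map_zero]
    · exact hT_lt n (by omega) _ (hD_homog hp)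

end Invariants

section Basis

lemma map_sum_coeff_smul_monomial_eq_zero {k ι : Type*} [Field k]
    {J : Subalgebra k (MvPolynomial ι k)}
    {T : MvPolynomial ι k →ₗ[J] MvPolynomial ι k} {d : ℕ}
    (hT_lt : ∀ n < d, ∀ p : MvPolynomial ι k, p.IsHomogeneous n → T p = 0)
    (hT_eq : ∀ p : MvPolynomial ι k, p.IsHomogeneous d → ∃ c, T p = C c)
    {t : Finset (ι →₀ ℕ)} {r : (ι →₀ ℕ) → J} (hmax : ∀ e ∈ t, r e ≠ 0 → e.degree ≤ d)
    (hsum : ∑ e ∈ t, r e • monomial e (1 : k) = 0) (u : ι →₀ ℕ) :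
    T (∑ e ∈ t with e.degree = d, coeff u (r e).1 • monomial e 1) = 0 := by
  have hrel : ∑ e ∈ t with e.degree = d, (r e).1 * T (monomial e 1) = 0 := by
    rw [← map_zero T, ← hsum, map_sum, Finset.sum_filter]
    refine Finset.sum_congr rfl fun e he => ?_
    rw [map_smul, Subalgebra.smul_def, smul_eq_mul]
    split_ifs with hdeg
    · rfl
    by_cases hre : r e = 0
    · rw [hre, ZeroMemClass.coe_zero, zero_mul]
    · rw [hT_lt _ (lt_of_le_of_ne (hmax e he hre) hdeg) _ (isHomogeneous_monomial _ rfl), mul_zero]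
  have hTC {e : ι →₀ ℕ} (he : e.degree = d) (p : MvPolynomial ι k) :
      T (coeff u p • monomial e 1) = C (coeff u (p * T (monomial e 1))) := by
    obtain ⟨c, hc⟩ := hT_eq _ (isHomogeneous_monomial (1 : k) he)
    rw [LinearMap.map_smul_of_tower, hc, mul_comm p, coeff_C_mul, smul_eq_C_mul, ← C_mul, mul_comm]
  rw [map_sum, Finset.sum_congr rfl fun e he => hTC (Finset.mem_filter.mp he).2 (r e).1,
    ← map_sum, ← coeff_sum, hrel, coeff_zero, map_zero]

variable {k ι Φ : Type*} [Fintype ι] [Field k] {rt ct : Φ → ι → k}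

lemma exists_monomials_complement_hilbertIdeal (rt ct : Φ → ι → k) :
    ∃ E : Set (ι →₀ ℕ), ∀ d,
      LinearIndepOn k (fun e => ((hilbertIdeal rt ct).restrictScalars k).mkQ (monomial e 1))
        {e ∈ E | e.degree = d} ∧
      ∀ q : MvPolynomial ι k, q.IsHomogeneous d →
        ∃ y ∈ Submodule.span k ((fun e => monomial e (1 : k)) '' {e ∈ E | e.degree = d}),
          q - y ∈ hilbertIdeal rt ct := by
  have hext (d : ℕ) := exists_linearIndepOn_extension
    (v := fun e => ((hilbertIdeal rt ct).restrictScalars k).mkQ (monomial e 1))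
    (linearIndepOn_empty k _) (Set.empty_subset {e : ι →₀ ℕ | e.degree = d})
  choose F hFd _ hFspan hF using hext
  have hE (d : ℕ) : {e ∈ ⋃ n, F n | e.degree = d} = F d := by
    ext e
    refine ⟨fun ⟨he, hed⟩ => ?_, fun he => ⟨Set.mem_iUnion_of_mem d he, hFd d he⟩⟩
    obtain ⟨n, hn⟩ := Set.mem_iUnion.mp he
    exact hed ▸ (hFd n hn).symm ▸ hn
  refine ⟨⋃ d, F d, fun d => ?_⟩
  rw [hE]
  refine ⟨hF d, fun q hq => ?_⟩
  have hqspan : q ∈ Submodule.span k ((fun e => monomial e (1 : k)) '' {e | e.degree = d}) := by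
    rw [← restrictSupport_eq_span, mem_restrictSupport_iff]
    exact fun e he => by_contra fun h => (mem_support_iff.mp he) (hq.coeff_eq_zero h)
  have hmem := Submodule.mem_map_of_mem (f := ((hilbertIdeal rt ct).restrictScalars k).mkQ) hqspan
  rw [Submodule.map_span, Set.image_image] at hmem
  have hmem' := Submodule.span_le.mpr (hFspan d) hmem
  rw [← Set.image_image (Submodule.mkQ _) (fun e => monomial e (1 : k)), ← Submodule.map_span]
    at hmem'
  obtain ⟨y, hy, hyq⟩ := hmem'
  exact ⟨y, hy, (Submodule.Quotient.eq _).mp hyq.symm⟩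

lemma mem_span_invariants_mul_monomial {E : Set (ι →₀ ℕ)}
    (hE : ∀ d, ∀ q : MvPolynomial ι k, q.IsHomogeneous d →
      ∃ y ∈ Submodule.span k ((fun e => monomial e (1 : k)) '' {e ∈ E | e.degree = d}),
        q - y ∈ hilbertIdeal rt ct)
    {d : ℕ} {q : MvPolynomial ι k} (hq : q.IsHomogeneous d) :
    q ∈ Submodule.span k {p | ∃ a, ∃ e ∈ E, a + e.degree = d ∧
      ∃ r ∈ invariants rt ct, r.IsHomogeneous a ∧ p = r * monomial e 1} := by
  induction d using Nat.strong_induction_on generalizing q with | _ d ih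
  obtain ⟨y, hy, hyq⟩ := hE d q hq
  have hyd : y.IsHomogeneous d := by
    refine (Submodule.span_le (p := homogeneousSubmodule ι k d)).mpr ?_ hy
    rintro _ ⟨e, he, rfl⟩
    exact isHomogeneous_monomial _ he.2
  rw [← sub_add_cancel q y]
  refine add_mem ?_ ?_
  · have hcomp := homogeneousComponent_mem_of_mem_hilbertIdeal hyq d
    rw [homogeneousComponent_eq_self (hq.sub hyd)] at hcomp
    refine Submodule.span_le.mpr ?_ hcomp
    rintro _ ⟨a, ha, b, rfl, r, hr, hra, s, hs, rfl⟩
    suffices s ∈ Submodule.comap (LinearMap.mulLeft k r) (Submodule.span k _) from this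
    refine Submodule.span_le.mpr ?_ (ih b (by omega) hs)
    rintro _ ⟨a', e, he, rfl, r', hr', hra', rfl⟩
    exact Submodule.subset_span ⟨a + a', e, he, add_assoc _ _ _, r * r', mul_mem hr hr',
      hra.mul hra', (mul_assoc _ _ _).symm⟩
  · refine Submodule.span_mono ?_ hy
    rintro _ ⟨e, ⟨he, rfl⟩, rfl⟩
    exact ⟨0, e, he, zero_add _, 1, one_mem _, isHomogeneous_one ι k, (one_mul _).symm⟩

variable [CharZero k]

lemma linearIndepOn_monomial_of_hilbertIdeal [Finite (reflectionMonoid rt ct)]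
    (h2 : ∀ α, rt α ⬝ᵥ ct α = 2) {E : Set (ι →₀ ℕ)}
    (hE : ∀ d, LinearIndepOn k
      (fun e => ((hilbertIdeal rt ct).restrictScalars k).mkQ (monomial e 1))
      {e ∈ E | e.degree = d}) :
    LinearIndepOn (invariants rt ct) (fun e => monomial e (1 : k)) E := by
  classical
  refine linearIndepOn_iff'.mpr fun t r htE hsum => ?_
  by_contra! hne
  obtain ⟨e₀, he₀, hmax⟩ := {e ∈ t | r e ≠ 0}.exists_max_image (fun e => e.degree)
    (by simpa [Finset.Nonempty] using hne)
  obtain ⟨he₀t, hre₀⟩ := Finset.mem_filter.mp he₀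
  obtain ⟨u, hu⟩ := ne_zero_iff.mp (Subtype.coe_ne_coe.mpr hre₀)
  let q : MvPolynomial ι k := ∑ e ∈ t with e.degree = e₀.degree, coeff u (r e).1 • monomial e 1
  have hq : q.IsHomogeneous e₀.degree := IsHomogeneous.sum _ _ _ fun e he => by
    rw [smul_monomial]
    exact isHomogeneous_monomial _ (Finset.mem_filter.mp he).2
  have hqI : q ∉ hilbertIdeal rt ct := fun hqI => hu <| by
    refine linearIndepOn_iff'.mp (hE e₀.degree) {e ∈ t | e.degree = e₀.degree}
      (fun e => coeff u (r e).1) (fun e he => ?_) ?_ e₀ (by simpa using he₀t)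
    · rw [Finset.mem_coe, Finset.mem_filter] at he
      exact ⟨htE he.1, he.2⟩
    · rw [← (Submodule.Quotient.mk_eq_zero ((hilbertIdeal rt ct).restrictScalars k)).mpr hqI]
      exact (map_sum (Submodule.mkQ _) _ _).symm
  obtain ⟨T, hT_lt, hT_eq, hTq⟩ := exists_linearMap_eq_C_of_notMem_hilbertIdeal h2 hq hqI
  exact hTq <| map_sum_coeff_smul_monomial_eq_zero hT_lt hT_eq
    (fun e he hre => hmax e (Finset.mem_filter.mpr ⟨he, hre⟩)) hsum u

theorem exists_basis_monomial_over_invariants [Finite (reflectionMonoid rt ct)]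
    (h2 : ∀ α, rt α ⬝ᵥ ct α = 2) :
    ∃ (E : Set (ι →₀ ℕ)) (B : Module.Basis E (invariants rt ct) (MvPolynomial ι k)),
      (∀ e, B e = monomial e.1 1) ∧
      ∀ d, ∀ q : MvPolynomial ι k, q.IsHomogeneous d →
        q ∈ Submodule.span k {p | ∃ a, ∃ e ∈ E, a + e.degree = d ∧
          ∃ r ∈ invariants rt ct, r.IsHomogeneous a ∧ p = r * monomial e 1} := by
  obtain ⟨E, hE⟩ := exists_monomials_complement_hilbertIdeal rt ct
  have hgraded (d : ℕ) (q : MvPolynomial ι k) (hq : q.IsHomogeneous d) :=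
    mem_span_invariants_mul_monomial (fun d => (hE d).2) hq
  refine ⟨E, .mk (linearIndepOn_monomial_of_hilbertIdeal h2 fun d => (hE d).1) fun q _ => ?_,
    fun e => Module.Basis.mk_apply .., hgraded⟩
  rw [← sum_homogeneousComponent q]
  refine sum_mem fun d _ => ?_
  refine (Submodule.span_le (p := (Submodule.span _ _).restrictScalars k)).mpr ?_
    (hgraded d _ (homogeneousComponent_isHomogeneous d q))
  rintro _ ⟨a, e, he, -, r, hr, -, rfl⟩
  exact Submodule.smul_mem _ (⟨r, hr⟩ : invariants rt ct) (Submodule.subset_span ⟨⟨e, he⟩, rfl⟩)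

end Basis

/-! ### Word filtrations and symmetrization -/

section WordFiltration

variable {k I A : Type*} [CommSemiring k] [Semiring A] [Algebra k A]

/-- The span of the words of weight less than `m` in the elements `u i`, where `u i` is given the
weight `w i`. For `u = X` this is the filtration of the polynomial ring by weighted degree. The
strict inequality makes the `0`-th step vanish. -/
def wordFiltration (k : Type*) [CommSemiring k] [Algebra k A] (u : I → A) (w : I → ℕ) (m : ℕ) :
    Submodule k A :=
  Submodule.span k {a | ∃ l : List I, (l.map w).sum < m ∧ (l.map u).prod = a}

variable (u : I → A) (w : I → ℕ) {m n r : ℕ}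

lemma prod_mem_wordFiltration (l : List I) (h : (l.map w).sum < m) :
    (l.map u).prod ∈ wordFiltration k u w m :=
  Submodule.subset_span ⟨l, h, rfl⟩

lemma wordFiltration_mono : Monotone (wordFiltration k u w) := fun _ _ h =>
  Submodule.span_mono fun _ ⟨l, hl, ha⟩ => ⟨l, hl.trans_le h, ha⟩

lemma wordFiltration_zero : wordFiltration k u w 0 = ⊥ :=
  Submodule.span_eq_bot.mpr fun _ ⟨_, hl, _⟩ => absurd hl (Nat.not_lt_zero _)

variable {u w}

lemma mul_mem_wordFiltration (h : m + n ≤ r + 1) {a b : A} (ha : a ∈ wordFiltration k u w m)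
    (hb : b ∈ wordFiltration k u w n) : a * b ∈ wordFiltration k u w r := by
  have hab := Submodule.mul_mem_mul ha hb
  rw [wordFiltration, wordFiltration, Submodule.span_mul_span] at hab
  refine Submodule.span_mono ?_ hab
  rintro _ ⟨_, ⟨l, hl, rfl⟩, _, ⟨l', hl', rfl⟩, rfl⟩
  exact ⟨l ++ l', by rw [List.map_append, List.sum_append]; omega, by simp⟩

lemma apply_mem_wordFiltration {i : I} (h : w i < m) : u i ∈ wordFiltration k u w m := by
  simpa using prod_mem_wordFiltration (k := k) u w [i] (by simpa using h)

lemma one_mem_wordFiltration (h : 0 < m) : (1 : A) ∈ wordFiltration k u w m :=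
  prod_mem_wordFiltration u w [] h

lemma apply_mul_mem_wordFiltration {i : I} (h : m + w i ≤ r) {b : A}
    (hb : b ∈ wordFiltration k u w m) : u i * b ∈ wordFiltration k u w r :=
  mul_mem_wordFiltration (m := w i + 1) (by omega) (apply_mem_wordFiltration (by omega)) hb

lemma exists_mem_wordFiltration (hu : Algebra.adjoin k (Set.range u) = ⊤) (a : A) :
    ∃ m, a ∈ wordFiltration k u w m := by
  have ha : a ∈ Algebra.adjoin k (Set.range u) := hu ▸ Algebra.mem_top
  induction ha using Algebra.adjoin_induction with
  | mem _ hx =>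
    obtain ⟨i, rfl⟩ := hx
    exact ⟨w i + 1, apply_mem_wordFiltration (Nat.lt_succ_self _)⟩
  | algebraMap c =>
    rw [Algebra.algebraMap_eq_smul_one]
    exact ⟨1, Submodule.smul_mem _ _ (one_mem_wordFiltration one_pos)⟩
  | add x y _ _ hx hy =>
    obtain ⟨⟨m, hm⟩, ⟨n, hn⟩⟩ := And.intro hx hy
    exact ⟨m + n, add_mem (wordFiltration_mono u w (Nat.le_add_right m n) hm)
      (wordFiltration_mono u w (Nat.le_add_left n m) hn)⟩
  | mul x y _ _ hx hy =>
    obtain ⟨⟨m, hm⟩, ⟨n, hn⟩⟩ := And.intro hx hy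
    exact ⟨m + n, mul_mem_wordFiltration (Nat.le_succ _) hm hn⟩

lemma degree_sub_single_add {s : I →₀ ℕ} {i : I} (hi : s i ≠ 0) :
    (s - Finsupp.single i 1).degree + 1 = s.degree := by
  conv_rhs => rw [← Finsupp.sub_add_single_one_cancel hi, map_add, Finsupp.degree_single]

lemma monomial_mem_wordFiltration {s : I →₀ ℕ} (h : Finsupp.weight w s < m) (c : k) :
    monomial s c ∈ wordFiltration k (X : I → MvPolynomial I k) w m := by
  induction hn : s.degree generalizing s m with
  | zero =>
    rw [(Finsupp.degree_eq_zero_iff s).mp hn, monomial_zero', ← mul_one (C c), ← smul_eq_C_mul]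
    exact Submodule.smul_mem _ _ (one_mem_wordFiltration (Nat.zero_lt_of_lt h))
  | succ n ih =>
    obtain ⟨i, hi⟩ : ∃ i, s i ≠ 0 := by
      by_contra! h0
      simp [(Finsupp.ext h0 : s = 0)] at hn
    have hdeg := degree_sub_single_add hi
    have hweight := Finsupp.weight_sub_single_add (w := w) hi
    rw [← Finsupp.sub_add_single_one_cancel hi, monomial_add_single, pow_one, mul_comm]
    exact apply_mul_mem_wordFiltration (m := m - w i) (by omega) (ih (by omega) (by omega))

lemma wordFiltration_X_eq_span : wordFiltration k (X : I → MvPolynomial I k) w m =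
    Submodule.span k ((monomial · 1) '' {s | Finsupp.weight w s < m}) := by
  have hprod (l : List I) : ∃ s : I →₀ ℕ, Finsupp.weight w s = (l.map w).sum ∧
      monomial s (1 : k) = (l.map X).prod := by
    induction l with
    | nil => exact ⟨0, by simp, rfl⟩
    | cons i l ih =>
      obtain ⟨s, hs, hl⟩ := ih
      refine ⟨Finsupp.single i 1 + s, by simp [Finsupp.weight_single, hs], ?_⟩
      rw [List.map_cons, List.prod_cons, ← hl, X, monomial_mul, one_mul]
  refine le_antisymm (Submodule.span_le.mpr ?_) (Submodule.span_le.mpr ?_)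
  · rintro _ ⟨l, hl, rfl⟩
    obtain ⟨s, hs, hl'⟩ := hprod l
    exact Submodule.subset_span ⟨s, hs.trans_lt hl, hl'⟩
  · rintro _ ⟨s, hs, rfl⟩
    exact monomial_mem_wordFiltration hs 1

end WordFiltration

section Symmetrization

variable {k I A : Type*} [Field k] [Fintype I] [Ring A] [Algebra k A]

/-- Symmetrization of homogeneous polynomials of degree `n`. The recursion is Euler's identity
`(n + 1) p = ∑ i, X i * ∂ᵢ p`, transported to `A`. -/
noncomputable def symmetrizationOfDegree (u : I → A) : ℕ → MvPolynomial I k →ₗ[k] A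
  | 0 => (Algebra.linearMap k A) ∘ₗ lcoeff (R := k) 0
  | n + 1 => ((n + 1 : k)⁻¹) • ∑ i, (LinearMap.mulLeft k (u i)) ∘ₗ symmetrizationOfDegree u n ∘ₗ
      (pderiv i : Derivation k (MvPolynomial I k) (MvPolynomial I k)).toLinearMap

/-- The symmetrization map, sending `X i₁ ⋯ X iₙ` to the average of the products
`u (i_σ(1)) ⋯ u (i_σ(n))` over all permutations `σ`. -/
noncomputable def symmetrization (u : I → A) : MvPolynomial I k →ₗ[k] A :=
  (basisMonomials I k).constr k fun s => symmetrizationOfDegree u s.degree (monomial s (1 : k))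

variable (u : I → A) {n : ℕ} {p : MvPolynomial I k}

lemma symmetrization_of_isHomogeneous (hp : p.IsHomogeneous n) :
    symmetrization u p = symmetrizationOfDegree u n p := by
  rw [p.as_sum, map_sum, map_sum]
  refine Finset.sum_congr rfl fun s hs => ?_
  have hsn : s.degree = n := by_contra fun h =>
    mem_support_iff.mp hs (hp.coeff_eq_zero h)
  have hbasis := (basisMonomials I k).constr_basis k
    (fun s => symmetrizationOfDegree u s.degree (monomial s (1 : k))) s
  rw [coe_basisMonomials, hsn] at hbasis
  rw [← mul_one (coeff s p), ← smul_eq_mul, ← smul_monomial, map_smul, map_smul]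
  exact congrArg (coeff s p • ·) hbasis

lemma symmetrization_C (c : k) :
    symmetrization u (C c : MvPolynomial I k) = algebraMap k A c := by
  rw [symmetrization_of_isHomogeneous u (isHomogeneous_C I c)]
  simp [symmetrizationOfDegree]

lemma symmetrization_one : symmetrization u (1 : MvPolynomial I k) = 1 := by
  rw [← C_1, symmetrization_C, map_one]

lemma eq_C_of_isHomogeneous_zero {σ R : Type*} [CommSemiring R] {p : MvPolynomial σ R}
    (hp : p.IsHomogeneous 0) : p = C (coeff 0 p) :=
  totalDegree_eq_zero_iff_eq_C.mp ((totalDegree_zero_iff_isHomogeneous _).mpr hp)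

variable [CharZero k]

lemma natCast_smul_symmetrization (hp : p.IsHomogeneous n) :
    (n : k) • symmetrization u p = ∑ i, u i * symmetrization u (pderiv i p) := by
  cases n with
  | zero =>
    rw [eq_C_of_isHomogeneous_zero hp]
    simp
  | succ n =>
    rw [symmetrization_of_isHomogeneous u hp]
    simp only [symmetrizationOfDegree, LinearMap.smul_apply, LinearMap.sum_apply,
      LinearMap.comp_apply, LinearMap.mulLeft_apply, Derivation.coeFn_coe]
    rw [Nat.cast_succ, smul_inv_smul₀ n.cast_add_one_ne_zero]
    exact Finset.sum_congr rfl fun i _ => by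
      rw [symmetrization_of_isHomogeneous u (hp.pderiv (i := i)), Nat.add_sub_cancel]

lemma pderiv_comm {σ R : Type*} [CommRing R] (i j : σ) (p : MvPolynomial σ R) :
    pderiv i (pderiv j p) = pderiv j (pderiv i p) := by
  classical
  let D (i : σ) : Derivation R (MvPolynomial σ R) (MvPolynomial σ R) := pderiv i
  have hbracket : ⁅D i, D j⁆ = 0 := by
    refine derivation_ext fun l => ?_
    rw [Derivation.commutator_apply]
    simp only [D, pderiv_X, Pi.single_apply]
    split_ifs <;> simp
  exact sub_eq_zero.mp ((Derivation.commutator_apply p).symm.trans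
    (DFunLike.congr_fun hbracket p))

lemma natCast_smul_symmetrization_right (hp : p.IsHomogeneous n) :
    (n : k) • symmetrization u p = ∑ i, symmetrization u (pderiv i p) * u i := by
  induction n generalizing p with
  | zero =>
    rw [eq_C_of_isHomogeneous_zero hp]
    simp
  | succ n ih =>
    have hpd (i : I) : (pderiv i p).IsHomogeneous n := hp.pderiv (i := i)
    rw [natCast_smul_symmetrization u hp]
    rcases eq_or_ne n 0 with rfl | hn
    · refine Finset.sum_congr rfl fun i _ => ?_
      rw [eq_C_of_isHomogeneous_zero (hpd i), symmetrization_C, Algebra.commutes]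
    refine smul_right_injective _ (Nat.cast_ne_zero (R := k).mpr hn) ?_
    calc (n : k) • ∑ i, u i * symmetrization u (pderiv i p)
        = ∑ i, ∑ j, u i * symmetrization u (pderiv j (pderiv i p)) * u j := by
          simp only [Finset.smul_sum, ← mul_smul_comm, ih (hpd _), Finset.mul_sum, mul_assoc]
      _ = ∑ j, ∑ i, u i * symmetrization u (pderiv i (pderiv j p)) * u j := by
          rw [Finset.sum_comm]
          simp only [pderiv_comm]
      _ = (n : k) • ∑ j, symmetrization u (pderiv j p) * u j := by
          simp only [Finset.smul_sum, ← smul_mul_assoc, natCast_smul_symmetrization u (hpd _),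
            Finset.sum_mul]

lemma add_one_smul_mul_symmetrization_sub (hp : p.IsHomogeneous n) (j : I) :
    (n + 1 : k) • (u j * symmetrization u p - symmetrization u (X j * p)) =
      ∑ i, ((u j * u i - u i * u j) * symmetrization u (pderiv i p) +
        u i * (u j * symmetrization u (pderiv i p) - symmetrization u (X j * pderiv i p))) := by
  classical
  have hXp := natCast_smul_symmetrization u ((isHomogeneous_X k j).mul hp)
  have hp' := natCast_smul_symmetrization u hp
  have hpderiv (i : I) : u i * symmetrization u (pderiv i (X j * p)) =
      (if i = j then u j * symmetrization u p else 0) +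
        u i * symmetrization u (X j * pderiv i p) := by
    rw [pderiv_mul, pderiv_X, Pi.single_apply, map_add, mul_add]
    congr 1
    rcases eq_or_ne i j with rfl | hij
    · simp
    · simp [hij, hij.symm]
  simp only [hpderiv, Finset.sum_add_distrib, Finset.sum_ite_eq', Finset.mem_univ, if_true,
    add_comm 1 n, Nat.cast_succ] at hXp
  rw [smul_sub, hXp, add_smul, one_smul, ← mul_smul_comm, hp', Finset.mul_sum, add_comm,
    add_sub_add_left_eq_sub, ← Finset.sum_sub_distrib]
  exact Finset.sum_congr rfl fun i _ => by noncomm_ring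

/-- The elements `u i` have positive weights, and their commutators have smaller weight than the
products being commuted. -/
structure IsAlmostCommutative (k : Type*) [Field k] [Algebra k A] (u : I → A) (w : I → ℕ) :
    Prop where
  weight_pos : ∀ i, 0 < w i
  commutator_mem : ∀ i j, u i * u j - u j * u i ∈ wordFiltration k u w (w i + w j)

variable {u} {w : I → ℕ}

lemma symmetrization_monomial_mem_wordFiltration (s : I →₀ ℕ) (c : k) :
    symmetrization u (monomial s c) ∈ wordFiltration k u w (Finsupp.weight w s + 1) := by
  induction hn : s.degree generalizing s c with
  | zero =>
    rw [(Finsupp.degree_eq_zero_iff s).mp hn, monomial_zero', symmetrization_C,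
      Algebra.algebraMap_eq_smul_one]
    exact Submodule.smul_mem _ _ (one_mem_wordFiltration (Nat.succ_pos _))
  | succ n ih =>
    rw [← Submodule.smul_mem_iff _ (n.cast_add_one_ne_zero (R := k)), ← Nat.cast_succ,
      natCast_smul_symmetrization u (isHomogeneous_monomial c hn)]
    refine sum_mem fun i _ => ?_
    rw [pderiv_monomial]
    rcases eq_or_ne (s i) 0 with hi | hi
    · simp [hi]
    · have hdeg := degree_sub_single_add hi
      have hweight := Finsupp.weight_sub_single_add (w := w) hi
      exact apply_mul_mem_wordFiltration (by omega) (ih _ _ (by omega))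

lemma symmetrization_mem_wordFiltration {m : ℕ} (hp : p ∈ wordFiltration k X w m) :
    symmetrization u p ∈ wordFiltration k u w m := by
  rw [wordFiltration_X_eq_span] at hp
  revert hp
  apply Submodule.span_le (p := (wordFiltration k u w m).comap (symmetrization u)).mpr
  rintro _ ⟨s, hs, rfl⟩
  exact wordFiltration_mono u w (Nat.succ_le_of_lt hs)
    (symmetrization_monomial_mem_wordFiltration s 1)

lemma mul_symmetrization_monomial_sub_mem (hu : IsAlmostCommutative k u w) (j : I)
    (s : I →₀ ℕ) (c : k) :
    u j * symmetrization u (monomial s c) - symmetrization u (X j * monomial s c) ∈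
      wordFiltration k u w (Finsupp.weight w s + w j) := by
  induction hn : s.degree using Nat.strong_induction_on generalizing s c with
  | _ n ih =>
    rw [← Submodule.smul_mem_iff _ (n.cast_add_one_ne_zero (R := k)),
      add_one_smul_mul_symmetrization_sub u (isHomogeneous_monomial c hn)]
    refine sum_mem fun i _ => ?_
    rw [pderiv_monomial]
    rcases eq_or_ne (s i) 0 with hi | hi
    · simp [hi]
    · have hdeg := degree_sub_single_add hi
      have hweight := Finsupp.weight_sub_single_add (w := w) hi
      refine add_mem ?_ (apply_mul_mem_wordFiltration (by omega) (ih _ (by omega) _ _ rfl))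
      exact mul_mem_wordFiltration (by omega) (hu.commutator_mem j i)
        (symmetrization_monomial_mem_wordFiltration _ _)

lemma mul_symmetrization_sub_mem (hu : IsAlmostCommutative k u w) (j : I) {m : ℕ}
    (hp : p ∈ wordFiltration k X w (m + 1)) :
    u j * symmetrization u p - symmetrization u (X j * p) ∈ wordFiltration k u w (m + w j) := by
  rw [wordFiltration_X_eq_span] at hp
  revert hp
  apply Submodule.span_le (p := (wordFiltration k u w (m + w j)).comap
    (LinearMap.mulLeft k (u j) ∘ₗ symmetrization u -
      symmetrization u ∘ₗ LinearMap.mulLeft k (X j))).mpr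
  rintro _ ⟨s, hs, rfl⟩
  exact wordFiltration_mono u w (Nat.add_le_add_right (Nat.le_of_lt_succ hs) _)
    (mul_symmetrization_monomial_sub_mem hu j s 1)

lemma wordFiltration_le_map_symmetrization (hu : IsAlmostCommutative k u w) (m : ℕ) :
    wordFiltration k u w m ≤ (wordFiltration k X w m).map (symmetrization u) := by
  induction m using Nat.strong_induction_on with
  | _ m ih =>
    refine Submodule.span_le.mpr ?_
    rintro _ ⟨l, hl, rfl⟩
    cases l with
    | nil => exact ⟨1, one_mem_wordFiltration (Nat.zero_lt_of_lt hl), symmetrization_one u⟩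
    | cons i l =>
      rw [List.map_cons, List.sum_cons] at hl
      have hi := hu.weight_pos i
      obtain ⟨n, rfl⟩ : ∃ n, m = n + w i + 1 := ⟨m - w i - 1, by omega⟩
      obtain ⟨p, hp, hpl⟩ := ih (n + 1) (by omega) (prod_mem_wordFiltration u w l (by omega))
      obtain ⟨q, hq, hqp⟩ := ih (n + w i) (by omega) (mul_symmetrization_sub_mem hu i hp)
      refine ⟨X i * p + q, add_mem (apply_mul_mem_wordFiltration (by omega) hp)
        (wordFiltration_mono _ _ (Nat.le_succ _) hq), ?_⟩
      rw [map_add, hqp, hpl, add_sub_cancel, List.map_cons, List.prod_cons]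

lemma symmetrization_mul_symmetrization_sub_mem (hu : IsAlmostCommutative k u w) {m n : ℕ}
    {q : MvPolynomial I k} (hp : p ∈ wordFiltration k X w (m + 1))
    (hq : q ∈ wordFiltration k X w (n + 1)) :
    symmetrization u p * symmetrization u q - symmetrization u (p * q) ∈
      wordFiltration k u w (m + n) := by
  revert hp
  apply Submodule.span_le (p := (wordFiltration k u w (m + n)).comap
    (LinearMap.mulRight k (symmetrization u q) ∘ₗ symmetrization u -
      symmetrization u ∘ₗ LinearMap.mulRight k q)).mpr
  rintro _ ⟨l, hl, rfl⟩
  simp only [SetLike.mem_coe, Submodule.mem_comap, LinearMap.sub_apply, LinearMap.comp_apply,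
    LinearMap.mulRight_apply]
  induction l generalizing m with
  | nil => simp [symmetrization_one]
  | cons i l ih =>
    rw [List.map_cons, List.sum_cons] at hl
    rw [List.map_cons, List.prod_cons, mul_assoc (X i)]
    set g : MvPolynomial I k := (l.map X).prod
    have hg : g ∈ wordFiltration k X w (m - w i + 1) := prod_mem_wordFiltration X w l (by omega)
    have hsplit : symmetrization u (X i * g) * symmetrization u q -
          symmetrization u (X i * (g * q)) =
        -(u i * symmetrization u g - symmetrization u (X i * g)) * symmetrization u q +
          u i * (symmetrization u g * symmetrization u q - symmetrization u (g * q)) +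
          (u i * symmetrization u (g * q) - symmetrization u (X i * (g * q))) := by
      noncomm_ring
    rw [hsplit]
    refine add_mem (add_mem ?_ ?_) ?_
    · exact mul_mem_wordFiltration (by omega) (neg_mem (mul_symmetrization_sub_mem hu i hg))
        (symmetrization_mem_wordFiltration hq)
    · exact apply_mul_mem_wordFiltration (by omega) (ih (m := m - w i) (by omega))
    · exact wordFiltration_mono u w (by omega) (mul_symmetrization_sub_mem hu i
        (mul_mem_wordFiltration (r := m - w i + n + 1) (by omega) hg hq))

end Symmetrization

section Equivariance

variable {k I : Type*} [Field k]

lemma derivation_apply_eq_sum [Fintype I] (D : Derivation k (MvPolynomial I k) (MvPolynomial I k))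
    (p : MvPolynomial I k) : D p = ∑ j, D (X j) * pderiv j p := by
  induction p using MvPolynomial.induction_on with
  | C a => simp
  | add p q hp hq => simp only [map_add, hp, hq, mul_add, Finset.sum_add_distrib]
  | mul_X p i hp =>
    classical
    simp only [Derivation.leibniz, hp, smul_eq_mul, pderiv_X, Pi.single_apply, mul_add, 
      Finset.sum_add_distrib, mul_ite, mul_one, mul_zero, Finset.sum_ite_eq, Finset.mem_univ,
      if_true, Finset.mul_sum]
    simp only [mul_comm, mul_left_comm]

lemma derivation_isHomogeneous [Finite I] {D : Derivation k (MvPolynomial I k) (MvPolynomial I k)}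
    (hD : ∀ j, (D (X j)).IsHomogeneous 1) {n : ℕ} {p : MvPolynomial I k}
    (hp : p.IsHomogeneous n) : (D p).IsHomogeneous n := by
  cases nonempty_fintype I
  rw [derivation_apply_eq_sum]
  refine IsHomogeneous.sum _ _ _ fun j _ => ?_
  cases n with
  | zero =>
    rw [eq_C_of_isHomogeneous_zero hp, pderiv_C, mul_zero]
    exact isHomogeneous_zero _ _ _
  | succ n => simpa only [Nat.add_sub_cancel, add_comm 1] using (hD j).mul (hp.pderiv (i := j))

variable [Fintype I]

lemma pderiv_linearForm (v : I → k) (i : I) : pderiv i (linearForm v) = C (v i) := by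
  classical
  simp [linearForm_apply, pderiv_X, Pi.single_apply]

lemma pderiv_derivation {D : Derivation k (MvPolynomial I k) (MvPolynomial I k)} {v : I → I → k}
    (hD : ∀ j, D (X j) = linearForm (v j)) (i : I) (p : MvPolynomial I k) :
    pderiv i (D p) = D (pderiv i p) + ∑ j, v j i • pderiv j p := by
  rw [derivation_apply_eq_sum D p, derivation_apply_eq_sum D (pderiv i p), map_sum,
    ← Finset.sum_add_distrib]
  refine Finset.sum_congr rfl fun j _ => ?_
  rw [pderiv_mul, hD, pderiv_linearForm, pderiv_comm i j, smul_eq_C_mul, add_comm]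

variable [CharZero k] {A : Type*} [Ring A] [Algebra k A] {u : I → A}

lemma map_symmetrization_of_leibniz {E : A →ₗ[k] A}
    (hE : ∀ a b, E (a * b) = E a * b + a * E b)
    {D : Derivation k (MvPolynomial I k) (MvPolynomial I k)} {v : I → I → k}
    (hD : ∀ j, D (X j) = linearForm (v j)) (hu : ∀ j, E (u j) = ∑ i, v j i • u i)
    (p : MvPolynomial I k) : E (symmetrization u p) = symmetrization u (D p) := by
  suffices hom : ∀ n, ∀ p : MvPolynomial I k, p.IsHomogeneous n →
      E (symmetrization u p) = symmetrization u (D p) by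
    rw [← sum_homogeneousComponent p]
    simp only [map_sum]
    exact Finset.sum_congr rfl fun n _ => hom n _ (homogeneousComponent_isHomogeneous n p)
  intro n
  induction n with
  | zero =>
    intro p hp
    have hE1 : E 1 = 0 := by simpa using hE 1 1
    rw [eq_C_of_isHomogeneous_zero hp, derivation_C, map_zero, symmetrization_C,
      Algebra.algebraMap_eq_smul_one, map_smul, hE1, smul_zero]
  | succ n ih =>
    intro p hp
    have hDp : (D p).IsHomogeneous (n + 1) :=
      derivation_isHomogeneous (fun j => hD j ▸ linearForm_isHomogeneous _) hp
    refine smul_right_injective _ (n.cast_add_one_ne_zero (R := k)) ?_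
    simp only [← Nat.cast_succ]
    rw [← map_smul, natCast_smul_symmetrization u hp, natCast_smul_symmetrization u hDp]
    simp only [map_sum, hE, hu, pderiv_derivation hD, map_add, mul_add, Finset.sum_add_distrib,
      ih _ (hp.pderiv (n := n + 1)), map_smul, Finset.sum_mul, Finset.mul_sum, smul_mul_assoc,
      mul_smul_comm]
    rw [Finset.sum_comm, add_comm]

end Equivariance

/-! ### The enveloping algebra -/

section LieAction

variable {k κ M : Type*} [Field k] [Fintype κ] [AddCommGroup M] [Module k M]

/-- The elements of a module with basis `b`, regarded as the linear forms in the polynomial ring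
`Sym M = k[X i]`. -/
noncomputable def toLinearForm (b : Module.Basis κ k M) : M →ₗ[k] MvPolynomial κ k :=
  linearForm ∘ₗ b.equivFun.toLinearMap

lemma toLinearForm_apply (b : Module.Basis κ k M) (m : M) :
    toLinearForm b m = linearForm (b.equivFun m) := rfl

lemma toLinearForm_basis (b : Module.Basis κ k M) (i : κ) : toLinearForm b (b i) = X i := by
  classical
  rw [toLinearForm_apply, ← linearForm_single i]
  congr 1
  ext j
  rw [b.equivFun_self, Pi.single_apply]
  simp only [eq_comm]

lemma mkDerivation_toLinearForm (b : Module.Basis κ k M) (f : M →ₗ[k] M) (m : M) :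
    mkDerivation k (fun j => toLinearForm b (f (b j))) (toLinearForm b m) =
      toLinearForm b (f m) := by
  refine LinearMap.congr_fun (f := (mkDerivation k fun j => toLinearForm b (f (b j))).toLinearMap ∘ₗ
    toLinearForm b) (g := toLinearForm b ∘ₗ f) (b.ext fun j => ?_) m
  simp [toLinearForm_basis, mkDerivation_X]

variable {L : Type*} [LieRing L] [LieAlgebra k L] [LieRingModule L M] [LieModule k L M]

/-- The action of a Lie algebra on `Sym M` by derivations, for a Lie module `M` with basis `b`. -/
noncomputable def lieDerivation (b : Module.Basis κ k M) :
    L →ₗ⁅k⁆ Derivation k (MvPolynomial κ k) (MvPolynomial κ k) where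
  toFun x := mkDerivation k fun j => toLinearForm b ⁅x, b j⁆
  map_add' x y := derivation_ext fun j => by simp [mkDerivation_X]
  map_smul' c x := derivation_ext fun j => by simp [mkDerivation_X]
  map_lie' {x y} := derivation_ext fun j => by
    have h (z : L) (m : M) := mkDerivation_toLinearForm b (LieModule.toEnd k L M z) m
    simp only [LieModule.toEnd_apply_apply] at h
    simp only [Derivation.commutator_apply, mkDerivation_X, h, ← map_sub, lie_lie]

lemma lieDerivation_toLinearForm (b : Module.Basis κ k M) (x : L) (m : M) :
    lieDerivation b x (toLinearForm b m) = toLinearForm b ⁅x, m⁆ :=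
  mkDerivation_toLinearForm b (LieModule.toEnd k L M x) m

lemma lieDerivation_X (b : Module.Basis κ k M) (x : L) (j : κ) :
    lieDerivation b x (X j) = toLinearForm b ⁅x, b j⁆ :=
  mkDerivation_X _ _ _

end LieAction

section Enveloping

attribute [local instance] LieRing.ofAssociativeRing

variable {k L I : Type*} [Field k] [LieRing L] [LieAlgebra k L]

lemma adjoin_range_ι :
    Algebra.adjoin k (Set.range (UniversalEnvelopingAlgebra.ι k (L := L))) = ⊤ := by
  set S := Algebra.adjoin k (Set.range (UniversalEnvelopingAlgebra.ι k (L := L)))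
  let f : L →ₗ⁅k⁆ S :=
    { toFun x := ⟨UniversalEnvelopingAlgebra.ι k x, Algebra.subset_adjoin ⟨x, rfl⟩⟩
      map_add' x y := Subtype.ext (by simp)
      map_smul' c x := Subtype.ext (by simp)
      map_lie' {x y} := Subtype.ext (by simp [LieRing.of_associative_ring_bracket]) }
  have hf : S.val.comp (UniversalEnvelopingAlgebra.lift k f) =
      AlgHom.id k (UniversalEnvelopingAlgebra k L) :=
    UniversalEnvelopingAlgebra.hom_ext k (by ext x; simp [f])
  refine eq_top_iff.mpr fun a _ => ?_
  rw [← AlgHom.id_apply (R := k) a, ← hf]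
  exact Subtype.property _

/-- The images in the enveloping algebra of the elements of a basis of the Lie algebra. -/
noncomputable def envelopingGenerator (b : Module.Basis I k L) (i : I) :
    UniversalEnvelopingAlgebra k L :=
  UniversalEnvelopingAlgebra.ι k (b i)

lemma ι_lie (x y : L) : UniversalEnvelopingAlgebra.ι k ⁅x, y⁆ =
    UniversalEnvelopingAlgebra.ι k x * UniversalEnvelopingAlgebra.ι k y -
      UniversalEnvelopingAlgebra.ι k y * UniversalEnvelopingAlgebra.ι k x := by
  rw [LieHom.map_lie, LieRing.of_associative_ring_bracket]

variable (b : Module.Basis I k L)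

lemma ι_mem_span_range_envelopingGenerator (x : L) :
    UniversalEnvelopingAlgebra.ι k x ∈ Submodule.span k (Set.range (envelopingGenerator b)) := by
  have hx := Submodule.mem_map_of_mem
    (f := (UniversalEnvelopingAlgebra.ι k : L →ₗ⁅k⁆ _).toLinearMap) (b.mem_span x)
  rwa [Submodule.map_span, ← Set.range_comp] at hx

lemma adjoin_range_envelopingGenerator :
    Algebra.adjoin k (Set.range (envelopingGenerator b)) = ⊤ := by
  rw [← top_le_iff, ← adjoin_range_ι, Algebra.adjoin_le_iff]
  rintro _ ⟨x, rfl⟩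
  exact Algebra.span_le_adjoin k _ (ι_mem_span_range_envelopingGenerator b x)

lemma isAlmostCommutative_envelopingGenerator {w : I → ℕ} (hw : ∀ i j l, w l < w i + w j) :
    IsAlmostCommutative k (envelopingGenerator b) w where
  weight_pos i := by simpa using hw i i i
  commutator_mem i j := by
    rw [envelopingGenerator, envelopingGenerator, ← ι_lie]
    refine Submodule.span_le.mpr ?_ (ι_mem_span_range_envelopingGenerator b _)
    exact Set.range_subset_iff.mpr fun l => apply_mem_wordFiltration (hw i j l)

variable [Fintype I]

lemma ι_eq_sum (x : L) :
    UniversalEnvelopingAlgebra.ι k x = ∑ i, b.repr x i • envelopingGenerator b i := by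
  conv_lhs => rw [← b.sum_repr x, ← LieHom.coe_toLinearMap, map_sum]
  simp only [map_smul, LieHom.coe_toLinearMap, envelopingGenerator]

variable [CharZero k]

/-- The symmetrization map `Sym L → U(L)`. -/
noncomputable abbrev envelopingSymmetrization :
    MvPolynomial I k →ₗ[k] UniversalEnvelopingAlgebra k L :=
  symmetrization (envelopingGenerator b)

lemma ι_mul_envelopingSymmetrization_sub (x : L) (p : MvPolynomial I k) :
    UniversalEnvelopingAlgebra.ι k x * envelopingSymmetrization b p -
        envelopingSymmetrization b p * UniversalEnvelopingAlgebra.ι k x =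
      envelopingSymmetrization b (lieDerivation b x p) := by
  set e := UniversalEnvelopingAlgebra.ι k x
  refine map_symmetrization_of_leibniz (E := LinearMap.mulLeft k e - LinearMap.mulRight k e)
    (v := fun j => b.repr ⁅x, b j⁆) (fun a c => ?_) (fun j => ?_) (fun j => ?_) p
  · simp only [LinearMap.sub_apply, LinearMap.mulLeft_apply, LinearMap.mulRight_apply]
    noncomm_ring
  · rw [lieDerivation_X, toLinearForm_apply, b.equivFun_apply]
  · rw [← ι_eq_sum, ι_lie]
    rfl

end Enveloping

section DerivationPow

variable {k O : Type*} [CommRing k] [CommRing O] [Algebra k O]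

lemma derivation_mem_pow (D : Derivation k O O) (m : Ideal O) (n : ℕ) {y : O} (hy : y ∈ m ^ n) :
    D y ∈ m ^ (n - 1) := by
  induction n generalizing y with
  | zero => simp
  | succ n ih =>
    rw [pow_succ'] at hy
    induction hy using Submodule.mul_induction_on' with
    | mem_mul_mem a ha c hc =>
      rw [Derivation.leibniz, smul_eq_mul, smul_eq_mul]
      refine add_mem ?_ (Ideal.mul_mem_right _ _ hc)
      cases n with
      | zero => simp
      | succ n => exact pow_succ' m n ▸ Ideal.mul_mem_mul ha (ih hc)
    | add a _ c _ ha hc => exact map_add D a c ▸ add_mem ha hc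

end DerivationPow

section Injectivity

variable {k O I A : Type*} [Field k] [CharZero k] [CommRing O] [Algebra k O] [Fintype I]
  [Ring A] [Algebra k A] {u : I → A} {ρ : A →ₐ[k] Module.End k O} {δ : I → Derivation k O O}
  {m : Ideal O} {φ : I → O}

lemma action_symmetrization_mem (hρ : ∀ i y, ρ (u i) y = δ i y) {n r : ℕ} {p : MvPolynomial I k}
    (hp : p.IsHomogeneous n) {y : O} (hy : y ∈ m ^ (n + r)) :
    ρ (symmetrization u p) y ∈ m ^ r := by
  induction n generalizing p r with
  | zero =>
    rw [eq_C_of_isHomogeneous_zero hp, symmetrization_C, AlgHom.commutes,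
      Module.algebraMap_end_apply]
    exact Submodule.smul_of_tower_mem _ _ (by simpa using hy)
  | succ n ih =>
    have hmem : ((n + 1 : ℕ) : k) • ρ (symmetrization u p) y ∈ m ^ r := by
      rw [← LinearMap.smul_apply, ← map_smul, natCast_smul_symmetrization u hp, map_sum,
        LinearMap.sum_apply]
      refine sum_mem fun i _ => ?_
      rw [map_mul, Module.End.mul_apply, hρ]
      exact derivation_mem_pow _ _ (r + 1) (ih hp.pderiv (by rwa [add_right_comm] at hy))
    rwa [Submodule.smul_mem_iff _ (by exact_mod_cast n.succ_ne_zero)] at hmem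

lemma action_symmetrization_mul_sub_mem [DecidableEq I] (hρ : ∀ i y, ρ (u i) y = δ i y)
    (hφ : ∀ j, φ j ∈ m) (hδ : ∀ i j, δ i (φ j) - (if i = j then 1 else 0) ∈ m) {n : ℕ}
    {p : MvPolynomial I k} (hp : p.IsHomogeneous n) {y : O} (hy : y ∈ m ^ (n - 1)) (j : I) :
    ρ (symmetrization u p) (φ j * y) - ρ (symmetrization u (pderiv j p)) y ∈ m := by
  induction n generalizing p y with
  | zero =>
    rw [eq_C_of_isHomogeneous_zero hp, pderiv_C, map_zero, map_zero, LinearMap.zero_apply, sub_zero,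
      symmetrization_C, AlgHom.commutes, Module.algebraMap_end_apply]
    exact Submodule.smul_of_tower_mem _ _ (Ideal.mul_mem_right _ _ (hφ j))
  | succ n ih =>
    rw [Nat.add_sub_cancel] at hy
    have expand : ((n + 1 : ℕ) : k) • ρ (symmetrization u p) (φ j * y) =
        ∑ i, (ρ (symmetrization u (pderiv i p)) (φ j * δ i y) +
          ρ (symmetrization u (pderiv i p)) (y * (δ i (φ j) - if i = j then 1 else 0))) +
        ρ (symmetrization u (pderiv j p)) y := by
      have pick : ∑ i, ρ (symmetrization u (pderiv i p)) (y * if i = j then 1 else 0) =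
          ρ (symmetrization u (pderiv j p)) y := by
        simp [apply_ite (ρ _)]
      rw [← LinearMap.smul_apply, ← map_smul, natCast_smul_symmetrization_right u hp, map_sum,
        LinearMap.sum_apply, ← pick, ← Finset.sum_add_distrib]
      refine Finset.sum_congr rfl fun i _ => ?_
      rw [map_mul ρ, Module.End.mul_apply, hρ, Derivation.leibniz, smul_eq_mul, smul_eq_mul,
        map_add, add_assoc, ← map_add _ (y * _), ← mul_add, sub_add_cancel]
    have expand' : (n : k) • ρ (symmetrization u (pderiv j p)) y =
        ∑ i, ρ (symmetrization u (pderiv j (pderiv i p))) (δ i y) := by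
      rw [← LinearMap.smul_apply, ← map_smul,
        natCast_smul_symmetrization_right u (n := n) hp.pderiv, map_sum, LinearMap.sum_apply]
      simp only [map_mul, Module.End.mul_apply, hρ, pderiv_comm j]
    rw [← Submodule.smul_mem_iff m (s := ((n + 1 : ℕ) : k)) (by exact_mod_cast n.succ_ne_zero),
      smul_sub, expand, Nat.cast_succ, add_smul, one_smul, expand', add_sub_add_right_eq_sub,
      ← Finset.sum_sub_distrib]
    refine sum_mem fun i _ => ?_
    rw [add_sub_right_comm]
    refine add_mem (ih hp.pderiv (derivation_mem_pow (δ i) m n hy)) ?_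
    simpa only [pow_one] using action_symmetrization_mem hρ (r := 1) hp.pderiv
      (pow_succ m n ▸ Ideal.mul_mem_mul hy (hδ i j))

lemma eq_zero_of_action_symmetrization_mem [DecidableEq I] (hρ : ∀ i y, ρ (u i) y = δ i y)
    (hφ : ∀ j, φ j ∈ m) (hδ : ∀ i j, δ i (φ j) - (if i = j then 1 else 0) ∈ m) (hm : m ≠ ⊤)
    {n : ℕ} {p : MvPolynomial I k} (hp : p.IsHomogeneous n)
    (h : ∀ y ∈ m ^ n, ρ (symmetrization u p) y ∈ m) : p = 0 := by
  induction n generalizing p with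
  | zero =>
    rw [eq_C_of_isHomogeneous_zero hp]
    have h1 := h 1 (by simp)
    rw [eq_C_of_isHomogeneous_zero hp, symmetrization_C, AlgHom.commutes,
      Module.algebraMap_end_apply] at h1
    by_contra hc
    rw [Submodule.smul_mem_iff m (fun h0 => hc (by rw [h0, C_0]))] at h1
    exact hm (m.eq_top_iff_one.mpr h1)
  | succ n ih =>
    have hder (j : I) : pderiv j p = 0 := ih hp.pderiv fun y hy =>
      (Submodule.sub_mem_iff_right m (h _ (pow_succ' m n ▸ Ideal.mul_mem_mul (hφ j) hy))).mp
        (action_symmetrization_mul_sub_mem hρ hφ hδ hp hy j)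
    have euler := hp.sum_X_mul_pderiv
    simp only [hder, mul_zero, Finset.sum_const_zero] at euler
    exact (smul_eq_zero_iff_right n.succ_ne_zero).mp euler.symm

-- The symbol of `ρ (symmetrization u p)` is read off from its action on `m ^ n` modulo `m`, where
-- `n` is the degree of `p`: there each `φ j` is a coordinate on which `u j` acts as `∂ / ∂ φ j`.
lemma symmetrization_injective [DecidableEq I] (hρ : ∀ i y, ρ (u i) y = δ i y)
    (hφ : ∀ j, φ j ∈ m) (hδ : ∀ i j, δ i (φ j) - (if i = j then 1 else 0) ∈ m) (hm : m ≠ ⊤) :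
    Function.Injective (symmetrization u : MvPolynomial I k →ₗ[k] A) := by
  refine (injective_iff_map_eq_zero _).mpr fun p hp => ?_
  by_contra hp0
  obtain ⟨d, hd, hdeg⟩ := p.support.exists_mem_eq_sup (support_nonempty.mpr hp0) Finsupp.degree
  have top_eq_zero : homogeneousComponent d.degree p = 0 := by
    refine eq_zero_of_action_symmetrization_mem hρ hφ hδ hm
      (homogeneousComponent_isHomogeneous _ p) fun y hy => ?_
    have htotal : p.totalDegree = d.degree := hdeg
    have hsum : ∑ n ∈ Finset.range d.degree, ρ (symmetrization u (homogeneousComponent n p)) y +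
        ρ (symmetrization u (homogeneousComponent d.degree p)) y = 0 := by
      rw [← Finset.sum_range_succ, ← LinearMap.sum_apply, ← map_sum, ← map_sum, ← htotal,
        sum_homogeneousComponent, hp, map_zero, LinearMap.zero_apply]
    refine (Submodule.add_mem_iff_right m (sum_mem fun n hn => ?_)).mp (hsum ▸ m.zero_mem)
    refine pow_one m ▸ action_symmetrization_mem hρ (homogeneousComponent_isHomogeneous n p) ?_
    exact Ideal.pow_le_pow_right (Finset.mem_range.mp hn) hy
  have hcoeff := coeff_homogeneousComponent d.degree p d
  rw [top_eq_zero, coeff_zero, if_pos rfl] at hcoeff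
  exact mem_support_iff.mp hd hcoeff.symm

end Injectivity

section PBW

attribute [local instance] LieRing.ofAssociativeRing

variable {k L I : Type*} [Field k] [CharZero k] [LieRing L] [LieAlgebra k L] [Fintype I]
  (b : Module.Basis I k L)

lemma envelopingSymmetrization_injective_of_functional {M : Type*} [AddCommGroup M] [Module k M]
    [LieRingModule L M] [LieModule k L M] [FiniteDimensional k M] (ε : Module.Dual k M)
    (hε : ∀ x : L, (∀ m : M, ε ⁅x, m⁆ = 0) → x = 0) :
    Function.Injective (envelopingSymmetrization b) := by
  classical
  have : FiniteDimensional k L := .of_basis b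
  let c := Module.finBasis k M
  let B : L →ₗ[k] M →ₗ[k] k := (LieModule.toEnd k L M).toLinearMap.compr₂ ε
  have hB : Function.Surjective B.flip := LinearMap.flip_surjective_iff₁.mpr <|
    (injective_iff_map_eq_zero B).mpr fun x hx => hε x fun m => DFunLike.congr_fun hx m
  choose dual hdual using fun i => hB (b.coord i)
  let ev : MvPolynomial _ k →ₐ[k] k := aeval (ε ∘ c)
  have hev (m : M) : ev (toLinearForm c m) = ε m := by
    refine LinearMap.congr_fun (f := ev.toLinearMap ∘ₗ toLinearForm c) (c.ext fun j => ?_) m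
    simp [toLinearForm_basis, ev]
  let act : L →ₗ⁅k⁆ Module.End k (MvPolynomial _ k) :=
    { toFun x := (lieDerivation c x).toLinearMap
      map_add' x y := by rw [map_add]; rfl
      map_smul' a x := by rw [map_smul]; rfl
      map_lie' {x y} := by rw [LieHom.map_lie]; rfl }
  refine symmetrization_injective (ρ := UniversalEnvelopingAlgebra.lift k act)
    (δ := fun i => lieDerivation c (b i)) (m := RingHom.ker ev)
    (φ := fun j => toLinearForm c (dual j) - C (ε (dual j))) (fun i y => ?_) (fun j => ?_)
    (fun i j => ?_) (RingHom.ker_ne_top _)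
  · rw [envelopingGenerator, UniversalEnvelopingAlgebra.lift_ι_apply]
    rfl
  · rw [RingHom.mem_ker, map_sub, hev, algHom_C]
    exact sub_self _
  · rw [RingHom.mem_ker, map_sub, map_sub, derivation_C, sub_zero, lieDerivation_toLinearForm, hev]
    have hij := LinearMap.congr_fun (hdual j) (b i)
    rw [b.coord_apply, b.repr_self_apply] at hij
    rw [apply_ite ev, map_one, map_zero, sub_eq_zero]
    exact hij

lemma envelopingSymmetrization_injective (hL : ∀ x : L, (∀ y : L, ⁅x, y⁆ = 0) → x = 0) :
    Function.Injective (envelopingSymmetrization b) := by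
  classical
  have : FiniteDimensional k L := .of_basis b
  let ε : Module.Dual k (DirectSum I fun _ => L) :=
    ∑ i, b.coord i ∘ₗ DirectSum.component k I (fun _ => L) i
  refine envelopingSymmetrization_injective_of_functional b ε fun x hx => hL x fun y => ?_
  refine b.forall_coord_eq_zero_iff.mp fun i => ?_
  have component_lie (j : I) (m : DirectSum I fun _ => L) :
      DirectSum.component k I (fun _ => L) j ⁅x, m⁆ = ⁅x, DirectSum.component k I _ j m⁆ :=
    DirectSum.lie_module_bracket_apply x m j
  have hiy := hx (DirectSum.lof k I (fun _ => L) i y)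
  simp only [ε, LinearMap.sum_apply, LinearMap.comp_apply, component_lie] at hiy
  rwa [Finset.sum_eq_single i (fun j _ hj => ?_) (by simp), DirectSum.component.lof_self] at hiy
  rw [DirectSum.component.of, dif_neg hj.symm, lie_zero, map_zero]

end PBW

/-! ### Polynomials in two sets of variables -/

section TwoSets

variable {k Φ ι : Type*} [Field k]

/-- The coefficient, a polynomial in the variables `ι`, of the monomial with exponent `u` in the
variables `Φ`. -/
noncomputable def coeffInl (u : Φ →₀ ℕ) : MvPolynomial (Φ ⊕ ι) k →ₗ[k] MvPolynomial ι k :=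
  (lcoeff (MvPolynomial ι k) u).restrictScalars k ∘ₗ (sumAlgEquiv k Φ ι).toLinearMap

lemma coeffInl_apply (u : Φ →₀ ℕ) (p : MvPolynomial (Φ ⊕ ι) k) :
    coeffInl u p = coeff u (sumAlgEquiv k Φ ι p) := rfl

lemma coeffInl_ext {p q : MvPolynomial (Φ ⊕ ι) k} (h : ∀ u, coeffInl u p = coeffInl u q) :
    p = q :=
  (sumAlgEquiv k Φ ι).injective (MvPolynomial.ext _ _ h)

lemma coeff_coeffInl (u : Φ →₀ ℕ) (s : ι →₀ ℕ) (p : MvPolynomial (Φ ⊕ ι) k) :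
    coeff s (coeffInl u p) = coeff (u.sumElim s) p := by
  simp [coeffInl_apply, sumAlgEquiv, coeff, AddMonoidAlgebra.curryAlgEquiv,
    AddMonoidAlgebra.curryRingEquiv, AddMonoidAlgebra.curryAddEquiv]

lemma sumAlgEquiv_rename_inr (q : MvPolynomial ι k) :
    sumAlgEquiv k Φ ι (rename Sum.inr q) = C q :=
  DFunLike.congr_fun (sumAlgEquiv_comp_rename_inr (R := k) (S₁ := Φ) (S₂ := ι)) q

lemma coeffInl_rename_inr_mul (u : Φ →₀ ℕ) (q : MvPolynomial ι k) (p : MvPolynomial (Φ ⊕ ι) k) :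
    coeffInl u (rename Sum.inr q * p) = q * coeffInl u p := by
  rw [coeffInl_apply, map_mul, sumAlgEquiv_rename_inr, coeff_C_mul, coeffInl_apply]

lemma coeffInl_C_mul (u : Φ →₀ ℕ) (a : k) (p : MvPolynomial (Φ ⊕ ι) k) :
    coeffInl u (C a * p) = C a * coeffInl u p := by
  rw [← coeffInl_rename_inr_mul, rename_C]

open scoped Classical in
lemma coeffInl_X_mul (u : Φ →₀ ℕ) (α : Φ) (p : MvPolynomial (Φ ⊕ ι) k) :
    coeffInl u (X (Sum.inl α) * p) =
      if u α ≠ 0 then coeffInl (u - Finsupp.single α 1) p else 0 := by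
  rw [coeffInl_apply, map_mul, sumAlgEquiv_X_inl, coeff_X_mul']
  simp only [Finsupp.mem_support_iff, coeffInl_apply]

lemma coeffInl_pderiv_inl (u : Φ →₀ ℕ) (α : Φ) (p : MvPolynomial (Φ ⊕ ι) k) :
    coeffInl u (pderiv (Sum.inl α) p) =
      C ((u α : k) + 1) * coeffInl (u + Finsupp.single α 1) p := by
  rw [coeffInl_apply, ← pderiv_sumAlgEquiv, coeff_pderiv, coeffInl_apply]
  simp [mul_comm]

lemma coeffInl_pderiv_inr (u : Φ →₀ ℕ) (i : ι) (p : MvPolynomial (Φ ⊕ ι) k) :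
    coeffInl u (pderiv (Sum.inr i) p) = pderiv i (coeffInl u p) := by
  ext s
  have hs : u.sumElim s + Finsupp.single (Sum.inr i) 1 = u.sumElim (s + Finsupp.single i 1) := by
    rw [← Finsupp.sumElim_zero_single, ← Finsupp.sumElim_add, add_zero]
  rw [coeff_coeffInl, coeff_pderiv, coeff_pderiv, coeff_coeffInl, hs, Finsupp.sumElim_inr]

lemma coeffInl_rename_inr [DecidableEq Φ] (u : Φ →₀ ℕ) (q : MvPolynomial ι k) :
    coeffInl u (rename Sum.inr q) = if u = 0 then q else 0 := by
  simp only [coeffInl_apply, sumAlgEquiv_rename_inr, coeff_C, eq_comm]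

lemma exists_coeffInl_eq (q : (Φ →₀ ℕ) → MvPolynomial ι k) (F : Finset (Φ →₀ ℕ)) :
    ∃ Q : MvPolynomial (Φ ⊕ ι) k, (∀ u ∈ F, coeffInl u Q = q u) ∧ ∀ u ∉ F, coeffInl u Q = 0 := by
  classical
  have hQ (u : Φ →₀ ℕ) : coeff u (∑ w ∈ F, monomial w (q w)) = if u ∈ F then q u else 0 := by
    simp only [coeff_sum, coeff_monomial, Finset.sum_ite_eq']
  refine ⟨(sumAlgEquiv k Φ ι).symm (∑ w ∈ F, monomial w (q w)), fun u hu => ?_, fun u hu => ?_⟩ <;>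
    rw [coeffInl_apply, AlgEquiv.apply_symm_apply, hQ]
  exacts [if_pos hu, if_neg hu]

lemma degree_sumElim (u : Φ →₀ ℕ) (s : ι →₀ ℕ) :
    (u.sumElim s).degree = u.degree + s.degree := by
  rw [Finsupp.sumElim_eq_add, map_add, Finsupp.degree_mapDomain, Finsupp.degree_mapDomain]

lemma coeffInl_eq_zero_of_totalDegree_lt {p : MvPolynomial (Φ ⊕ ι) k} {u : Φ →₀ ℕ}
    (h : p.totalDegree < u.degree) : coeffInl u p = 0 := by
  ext s
  rw [coeff_coeffInl]
  refine coeff_eq_zero_of_totalDegree_lt (h.trans_le ?_)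
  exact (Nat.le_add_right _ _).trans (degree_sumElim u s).ge

lemma totalDegree_le_iff_degree_le {σ : Type*} {p : MvPolynomial σ k} {d : ℕ} :
    p.totalDegree ≤ d ↔ ∀ s, coeff s p ≠ 0 → s.degree ≤ d := by
  simp only [totalDegree, Finset.sup_le_iff, mem_support_iff]
  rfl

lemma totalDegree_le_iff_coeffInl {p : MvPolynomial (Φ ⊕ ι) k} {d : ℕ} :
    p.totalDegree ≤ d ↔ ∀ u, coeffInl u p ≠ 0 → u.degree + (coeffInl u p).totalDegree ≤ d := by
  constructor
  · intro h u hu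
    have hud : u.degree ≤ d :=
      not_lt.mp fun hd => hu (coeffInl_eq_zero_of_totalDegree_lt (h.trans_lt hd))
    suffices (coeffInl u p).totalDegree ≤ d - u.degree by omega
    refine totalDegree_le_iff_degree_le.mpr fun s hs => ?_
    have := totalDegree_le_iff_degree_le.mp h _ (coeff_coeffInl u s p ▸ hs)
    rw [degree_sumElim] at this
    omega
  · refine fun h => totalDegree_le_iff_degree_le.mpr fun t ht => ?_
    rw [← Finsupp.comapDomain_sumElim_comapDomain t] at ht ⊢
    rw [← coeff_coeffInl] at ht
    have hu := h _ (ne_of_apply_ne (coeff _) (ht.trans_eq (coeff_zero _).symm))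
    rw [degree_sumElim]
    exact (Nat.add_le_add_left (totalDegree_le_iff_degree_le.mp le_rfl _ ht) _).trans hu

end TwoSets

/-! ### The Chevalley restriction theorem -/

section AdjointInvariants

variable {k L I : Type*} [Field k] [LieRing L] [LieAlgebra k L] [Fintype I]

/-- The invariants of the adjoint action in `Sym L`. -/
noncomputable def adjointInvariants (b : Module.Basis I k L) : Subalgebra k (MvPolynomial I k) where
  carrier := {p | ∀ x : L, lieDerivation b x p = 0}
  mul_mem' hp hq x := by rw [Derivation.leibniz, hp x, hq x, smul_zero, smul_zero, add_zero]
  add_mem' hp hq x := by rw [map_add, hp x, hq x, add_zero]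
  algebraMap_mem' a x := Derivation.map_algebraMap _ a

lemma totalDegree_lieDerivation_le (b : Module.Basis I k L) (x : L) (p : MvPolynomial I k) :
    (lieDerivation b x p).totalDegree ≤ p.totalDegree := by
  have hX (j : I) : (lieDerivation b x (X j)).IsHomogeneous 1 := by
    rw [lieDerivation_X]
    exact linearForm_isHomogeneous _
  conv_lhs => rw [← sum_homogeneousComponent p, map_sum]
  refine totalDegree_finsetSum_le fun i hi => ?_
  have hhom := derivation_isHomogeneous hX (homogeneousComponent_isHomogeneous i p)
  exact hhom.totalDegree_le.trans (Nat.le_of_lt_succ (Finset.mem_range.mp hi))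

end AdjointInvariants

section Reflection

variable {k ι : Type*} [Field k] [CharZero k] [Fintype ι]

lemma reflection_eq_self_iff {f v : ι → k} (hfv : f ⬝ᵥ v = 2) {a : k} (ha : a ≠ 0)
    {q q' : MvPolynomial ι k} (h : C a * linearForm v * q' + dirDeriv f q = 0) :
    reflection f v q' = q' ↔ reflection f v q = q := by
  have hsum : C a * linearForm v * (q' - reflection f v q') +
      dirDeriv f (q - reflection f v q) = 0 := by
    have hrefl := congrArg (reflection f v) h
    rw [map_add, map_mul, map_mul, algHom_C, algebraMap_eq, reflection_linearForm_self hfv,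
      reflection_dirDeriv hfv, map_zero] at hrefl
    rw [map_sub]
    linear_combination h + hrefl
  have hne : C a * linearForm v ≠ 0 :=
    mul_ne_zero (C_ne_zero.mpr ha) (linearForm_ne_zero (ne_zero_of_dotProduct_eq_two hfv))
  constructor <;> intro hq <;> rw [hq, sub_self] at hsum
  · rw [mul_zero, zero_add] at hsum
    refine (sub_eq_zero.mp (eq_zero_of_reflection_eq_neg hfv ?_ hsum)).symm
    rw [map_sub, reflection_reflection hfv, neg_sub]
  · rw [map_zero, add_zero] at hsum
    exact (sub_eq_zero.mp ((mul_eq_zero.mp hsum).resolve_left hne)).symm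

end Reflection

lemma exists_eq_add_single_of_degree {Φ : Type*} {n : ℕ} {u : Φ →₀ ℕ} (h : u.degree = n + 1) :
    ∃ α, ∃ v : Φ →₀ ℕ, v.degree = n ∧ u = v + Finsupp.single α 1 := by
  obtain ⟨α, hα⟩ := Finsupp.ne_iff.mp fun hu : u = 0 => by simp [hu] at h
  have := degree_sub_single_add hα
  exact ⟨α, u - Finsupp.single α 1, by omega, (Finsupp.sub_add_single_one_cancel hα).symm⟩

section RootBasis

variable {k L Φ ι : Type*} [Field k] [LieRing L] [LieAlgebra k L] [Fintype ι]

/-- A basis of a Lie algebra adapted to a root space decomposition: the `b (inr i)` span a Cartan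
subalgebra, and the `b (inl α)` are root vectors for the roots `rt α`, whose opposites are
`rt (neg α)`. The coroot of `α` is `∑ i, ct α i • b (inr i)`, and it equals
`⁅b (inl (neg α)), b (inl α)⁆` up to the nonzero scalar `c α`. -/
structure IsRootBasis (b : Module.Basis (Φ ⊕ ι) k L) (rt ct : Φ → ι → k) (neg : Φ → Φ)
    (c : Φ → k) : Prop where
  neg_neg (α : Φ) : neg (neg α) = α
  neg_ne (α : Φ) : neg α ≠ α
  root_neg (α : Φ) : rt (neg α) = -rt α
  lie_inr_inr (i j : ι) : ⁅b (.inr i), b (.inr j)⁆ = 0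
  lie_inr_inl (i : ι) (α : Φ) : ⁅b (.inr i), b (.inl α)⁆ = rt α i • b (.inl α)
  scalar_ne_zero (α : Φ) : c α ≠ 0
  lie_neg_self (α : Φ) : ⁅b (.inl (neg α)), b (.inl α)⁆ = c α • ∑ i, ct α i • b (.inr i)
  exists_root_of_repr_lie_ne_zero (α β : Φ) (h : β ≠ neg α) (x : Φ ⊕ ι)
    (hx : b.repr ⁅b (.inl α), b (.inl β)⁆ x ≠ 0) : ∃ γ, x = .inl γ ∧ rt γ = rt α + rt β
  root_dotProduct_coroot (α : Φ) : rt α ⬝ᵥ ct α = 2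
  coroot_ne_smul (α β : Φ) (h : β ≠ α) (h' : β ≠ neg α) (a : k) : ct β ≠ a • ct α
  root_ne_two_smul (α β : Φ) : rt β ≠ (2 : k) • rt α

/-- The derivation of `Sym L` given by the root vector of `-α`. -/
noncomputable abbrev lowering [Fintype Φ] (b : Module.Basis (Φ ⊕ ι) k L) (neg : Φ → Φ) (α : Φ) :
    Derivation k (MvPolynomial (Φ ⊕ ι) k) (MvPolynomial (Φ ⊕ ι) k) :=
  lieDerivation b (b (.inl (neg α)))

/-- The exponent of the monomial `X α ^ a * X (-α) ^ a`. -/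
noncomputable def pairExponent (neg : Φ → Φ) (α : Φ) (a : ℕ) : Φ →₀ ℕ :=
  Finsupp.single α a + Finsupp.single (neg α) a

lemma pairExponent_zero (neg : Φ → Φ) (α : Φ) : pairExponent neg α 0 = 0 := by
  simp only [pairExponent, Finsupp.single_zero, add_zero]

lemma degree_pairExponent (neg : Φ → Φ) (α : Φ) (a : ℕ) :
    (pairExponent neg α a).degree = a + a := by
  rw [pairExponent, map_add, Finsupp.degree_single, Finsupp.degree_single]

namespace IsRootBasis

variable {b : Module.Basis (Φ ⊕ ι) k L} {rt ct : Φ → ι → k} {neg : Φ → Φ} {c : Φ → k}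

lemma root_ne_zero [NeZero (2 : k)] (H : IsRootBasis b rt ct neg c) (α : Φ) : rt α ≠ 0 :=
  ne_zero_of_dotProduct_eq_two ((dotProduct_comm _ _).trans (H.root_dotProduct_coroot α))

lemma linearForm_coroot_ne_zero [NeZero (2 : k)] (H : IsRootBasis b rt ct neg c) (α : Φ) :
    linearForm (ct α) ≠ 0 :=
  linearForm_ne_zero (ne_zero_of_dotProduct_eq_two (H.root_dotProduct_coroot α))

lemma eq_pairExponent_add_single [CharZero k] [Finite Φ] (H : IsRootBasis b rt ct neg c)
    {α : Φ} {v : Φ →₀ ℕ} (hv : ∀ β, β ≠ α → β ≠ neg α → v β = 0)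
    (hw : Finsupp.weight rt v + rt α = 0) :
    v = pairExponent neg α (v α) + Finsupp.single (neg α) 1 := by
  cases nonempty_fintype Φ
  have hne := H.neg_ne α
  have hroot : ((v α : k) + 1 - v (neg α)) • rt α = 0 := by
    rw [Finsupp.weight_eq_sum, Fintype.sum_eq_add α (neg α) hne.symm fun β hβ => by
      rw [hv β hβ.1 hβ.2, zero_smul], H.root_neg] at hw
    rw [← hw, sub_smul, add_smul, one_smul, Nat.cast_smul_eq_nsmul, Nat.cast_smul_eq_nsmul,
      smul_neg]
    abel
  have hcard : v (neg α) = v α + 1 := by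
    have := (smul_eq_zero.mp hroot).resolve_right (H.root_ne_zero α)
    exact_mod_cast (sub_eq_zero.mp this).symm
  ext γ
  by_cases hγ : γ = α
  · simp [hγ, pairExponent, hne]
  · by_cases hγ' : γ = neg α
    · simp [hγ', pairExponent, hne.symm, hcard]
    · simp [hv γ hγ hγ', pairExponent, Ne.symm hγ, Ne.symm hγ']

variable [Fintype Φ]

lemma lowering_X_inl_self (H : IsRootBasis b rt ct neg c) (α : Φ) :
    lowering b neg α (X (.inl α)) = rename Sum.inr (C (c α) * linearForm (ct α)) := by
  rw [lieDerivation_X, H.lie_neg_self, map_smul, map_sum, map_mul, linearForm_apply, map_sum,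
    smul_eq_C_mul, rename_C]
  simp only [map_smul, toLinearForm_basis, smul_eq_C_mul, map_mul, rename_C, rename_X]

lemma lowering_X_inr (H : IsRootBasis b rt ct neg c) (α : Φ) (i : ι) :
    lowering b neg α (X (.inr i)) = C (rt α i) * X (.inl (neg α)) := by
  rw [lieDerivation_X, ← lie_skew, H.lie_inr_inl, H.root_neg, map_neg, map_smul,
    toLinearForm_basis, smul_eq_C_mul, Pi.neg_apply, C_neg, neg_mul, _root_.neg_neg]

lemma coeffInl_lowering_X_inl_mul_eq_zero (H : IsRootBasis b rt ct neg c) {α β : Φ} (hβ : β ≠ α)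
    (v : Φ →₀ ℕ) (p : MvPolynomial (Φ ⊕ ι) k)
    (hp : ∀ γ, rt γ = rt β - rt α → coeffInl v (X (.inl γ) * p) = 0) :
    coeffInl v (lowering b neg α (X (.inl β)) * p) = 0 := by
  rw [lieDerivation_X, toLinearForm_apply, linearForm_apply, Finset.sum_mul, map_sum]
  refine Finset.sum_eq_zero fun x _ => ?_
  rw [mul_assoc, coeffInl_C_mul, b.equivFun_apply]
  by_cases hx : b.repr ⁅b (.inl (neg α)), b (.inl β)⁆ x = 0
  · rw [hx, C_0, zero_mul]
  obtain ⟨γ, rfl, hγ⟩ := H.exists_root_of_repr_lie_ne_zero (neg α) β (by rwa [H.neg_neg]) x hx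
  rw [hp γ (by rw [hγ, H.root_neg]; abel), mul_zero]

lemma coeffInl_lowering (H : IsRootBasis b rt ct neg c) (α : Φ) (v : Φ →₀ ℕ)
    (p : MvPolynomial (Φ ⊕ ι) k)
    (hp : ∀ β γ, rt γ = rt β - rt α → coeffInl v (X (.inl γ) * pderiv (.inl β) p) = 0) :
    coeffInl v (lowering b neg α p) =
      C (c α * (v α + 1)) * linearForm (ct α) * coeffInl (v + Finsupp.single α 1) p +
        if v (neg α) ≠ 0 then dirDeriv (rt α) (coeffInl (v - Finsupp.single (neg α) 1) p)
        else 0 := by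
  rw [derivation_apply_eq_sum, Fintype.sum_sum_type, map_add, map_sum, map_sum]
  congr 1
  · rw [Fintype.sum_eq_single α fun β hβ =>
        H.coeffInl_lowering_X_inl_mul_eq_zero hβ v _ (hp β), H.lowering_X_inl_self,
      coeffInl_rename_inr_mul, coeffInl_pderiv_inl, C_mul]
    ring
  · simp only [H.lowering_X_inr, mul_assoc, coeffInl_C_mul, coeffInl_X_mul, coeffInl_pderiv_inr]
    split_ifs
    · rw [derivation_apply_eq_sum (dirDeriv (rt α))]
      simp only [dirDeriv_X]
    · simp only [mul_zero, Finset.sum_const_zero]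

lemma coeffInl_lowering_of_forall_degree_le (H : IsRootBasis b rt ct neg c) (α : Φ) (v : Φ →₀ ℕ)
    (p : MvPolynomial (Φ ⊕ ι) k) (hp : ∀ w : Φ →₀ ℕ, w.degree ≤ v.degree → coeffInl w p = 0) :
    coeffInl v (lowering b neg α p) =
      C (c α * (v α + 1)) * linearForm (ct α) * coeffInl (v + Finsupp.single α 1) p := by
  have hdeg {β : Φ} (hβ : v β ≠ 0) : (v - Finsupp.single β 1).degree + 1 = v.degree :=
    degree_sub_single_add hβ
  rw [H.coeffInl_lowering α v p fun β γ _ => ?_, ite_eq_right_iff.mpr fun hα => ?_, add_zero]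
  · rw [hp _ (by have := hdeg hα; omega), map_zero]
  · rw [coeffInl_X_mul]
    split_ifs with hγ
    · rw [coeffInl_pderiv_inl, hp, mul_zero]
      rw [map_add, Finsupp.degree_single, hdeg hγ]
    · rfl

lemma coeffInl_lowering_pairExponent [NeZero (2 : k)] (H : IsRootBasis b rt ct neg c) (α : Φ)
    (a : ℕ) (p : MvPolynomial (Φ ⊕ ι) k) :
    coeffInl (pairExponent neg α a + Finsupp.single (neg α) 1) (lowering b neg α p) =
      C (c α * (a + 1)) * linearForm (ct α) * coeffInl (pairExponent neg α (a + 1)) p +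
        dirDeriv (rt α) (coeffInl (pairExponent neg α a) p) := by
  classical
  have hexp : pairExponent neg α a + Finsupp.single (neg α) 1 + Finsupp.single α 1 =
      pairExponent neg α (a + 1) := by
    simp only [pairExponent, Finsupp.single_add]
    abel
  have hne := H.neg_ne α
  rw [H.coeffInl_lowering α _ p fun β γ hγ => ?_, hexp, if_pos (by simp), add_tsub_cancel_right]
  · simp [pairExponent, hne]
  · have hα : α ≠ γ := by
      rintro rfl
      exact H.root_ne_two_smul α β (by rw [two_smul, ← eq_add_of_sub_eq hγ.symm])
    have hnegα : neg α ≠ γ := by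
      rintro rfl
      rw [H.root_neg, eq_sub_iff_add_eq, neg_add_cancel] at hγ
      exact H.root_ne_zero β hγ.symm
    rw [coeffInl_X_mul, if_neg (by simp [pairExponent, hα, hnegα])]

lemma coeffInl_lieDerivation_inr (H : IsRootBasis b rt ct neg c) (i : ι) (v : Φ →₀ ℕ)
    (p : MvPolynomial (Φ ⊕ ι) k) :
    coeffInl v (lieDerivation b (b (.inr i)) p) = C (Finsupp.weight rt v i) * coeffInl v p := by
  classical
  rw [derivation_apply_eq_sum, Fintype.sum_sum_type, map_add, map_sum, map_sum,
    Finset.sum_eq_zero (s := Finset.univ (α := ι)) fun j _ => by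
      rw [lieDerivation_X, H.lie_inr_inr, map_zero, zero_mul, map_zero], add_zero,
    Finsupp.weight_eq_sum, Finset.sum_apply, map_sum, Finset.sum_mul]
  refine Finset.sum_congr rfl fun β _ => ?_
  rw [lieDerivation_X, H.lie_inr_inl, map_smul, toLinearForm_basis, smul_eq_C_mul, mul_assoc,
    coeffInl_C_mul, coeffInl_X_mul]
  split_ifs with hβ
  · rw [coeffInl_pderiv_inl, Finsupp.sub_add_single_one_cancel hβ, ← mul_assoc, ← C_mul]
    congr 2
    rw [← Nat.cast_add_one, Pi.smul_apply, nsmul_eq_mul, mul_comm, Finsupp.tsub_apply,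
      Finsupp.single_eq_same, Nat.sub_add_cancel (Nat.one_le_iff_ne_zero.mpr hβ)]
  · rw [not_not.mp hβ, zero_smul, Pi.zero_apply, C_0, zero_mul, mul_zero]

variable [CharZero k]

lemma coeffInl_zero_mem_invariants (H : IsRootBasis b rt ct neg c) {p : MvPolynomial (Φ ⊕ ι) k}
    (hp : p ∈ adjointInvariants b) : coeffInl 0 p ∈ invariants rt ct := by
  intro α
  rw [← pairExponent_zero neg α]
  refine Nat.decreasingInduction' (n := p.totalDegree + 1)
    (P := fun j => reflection (rt α) (ct α) (coeffInl (pairExponent neg α j) p) =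
      coeffInl (pairExponent neg α j) p) (fun j _ _ ih => ?_) (Nat.zero_le _) ?_
  · refine (reflection_eq_self_iff (H.root_dotProduct_coroot α)
      (mul_ne_zero (H.scalar_ne_zero α) j.cast_add_one_ne_zero) ?_).mp ih
    rw [← H.coeffInl_lowering_pairExponent, hp, map_zero]
  · rw [coeffInl_eq_zero_of_totalDegree_lt (by rw [degree_pairExponent]; omega), map_zero]

lemma eq_zero_of_coeffInl_zero_eq_zero (H : IsRootBasis b rt ct neg c)
    {p : MvPolynomial (Φ ⊕ ι) k} (hp : p ∈ adjointInvariants b) (h0 : coeffInl 0 p = 0) :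
    p = 0 := by
  refine coeffInl_ext fun u => ?_
  rw [map_zero]
  induction hn : u.degree using Nat.strong_induction_on generalizing u with
  | _ n ih =>
    cases n with
    | zero => rwa [(Finsupp.degree_eq_zero_iff u).mp hn]
    | succ n =>
      obtain ⟨α, v, hv, rfl⟩ := exists_eq_add_single_of_degree hn
      have hcoeff := H.coeffInl_lowering_of_forall_degree_le α v p fun w hw =>
        ih w.degree (by omega) w rfl
      rw [hp, map_zero, eq_comm] at hcoeff
      refine (mul_eq_zero.mp hcoeff).resolve_left ?_
      exact mul_ne_zero (C_ne_zero.mpr (mul_ne_zero (H.scalar_ne_zero α)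
        (v α).cast_add_one_ne_zero)) (H.linearForm_coroot_ne_zero α)

end IsRootBasis

end RootBasis

section LinearForm

variable {k ι : Type*} [Field k] [Fintype ι]

lemma linearForm_dvd_of_dvd_linearForm_mul {v w : ι → k} (hv : v ≠ 0) (hw : ∀ a : k, w ≠ a • v)
    {q : MvPolynomial ι k} (h : linearForm v ∣ linearForm w * q) : linearForm v ∣ q := by
  classical
  obtain ⟨i, hi⟩ := Function.ne_iff.mp hv
  have hfv : (Pi.single i (v i)⁻¹ : ι → k) ⬝ᵥ v = 1 := by
    rw [single_dotProduct, inv_mul_cancel₀ hi]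
  -- For `f ⬝ᵥ v = 1` the map `reflection f v` is a projection that kills `linearForm v`.
  generalize (Pi.single i (v i)⁻¹ : ι → k) = f at hfv
  have hker : reflection f v (linearForm v) = 0 := by
    rw [reflection_linearForm, hfv, C_1, one_mul, sub_self]
  have hne : reflection f v (linearForm w) ≠ 0 := by
    rw [reflection_linearForm, ← smul_eq_C_mul, ← map_smul, ← map_sub]
    exact linearForm_ne_zero (sub_ne_zero.mpr (hw _))
  obtain ⟨g, hg⟩ := h
  have hq := congrArg (reflection f v) hg
  rw [map_mul, map_mul, hker, zero_mul] at hq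
  have hdvd := linearForm_dvd_sub_reflection f v q
  rwa [(mul_eq_zero.mp hq).resolve_left hne, sub_zero] at hdvd

end LinearForm

section ApproxLift

variable {k L Φ ι : Type*} [Field k] [LieRing L] [LieAlgebra k L] [Fintype ι] [Fintype Φ]

/-- `P` restricts to `f` on the Cartan subalgebra, and is annihilated by the adjoint action up to
terms of degree at least `M` in the root variables. -/
structure IsApproxLift (b : Module.Basis (Φ ⊕ ι) k L) (neg : Φ → Φ) (d M : ℕ)
    (f : MvPolynomial ι k) (P : MvPolynomial (Φ ⊕ ι) k) : Prop where
  coeffInl_zero : coeffInl 0 P = f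
  totalDegree_le : P.totalDegree ≤ d
  lieDerivation_inr (i : ι) : lieDerivation b (b (.inr i)) P = 0
  coeffInl_lowering (α : Φ) (v : Φ →₀ ℕ) (hv : v.degree < M) : coeffInl v (lowering b neg α P) = 0

variable {b : Module.Basis (Φ ⊕ ι) k L} {rt ct : Φ → ι → k} {neg : Φ → Φ} {c : Φ → k} {d M : ℕ}
  {f : MvPolynomial ι k} {P : MvPolynomial (Φ ⊕ ι) k}

lemma IsApproxLift.coeffInl_lieDerivation (hP : IsApproxLift b neg d M f P)
    (hneg : ∀ α, neg (neg α) = α) (x : L) {u : Φ →₀ ℕ} (hu : u.degree < M) :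
    coeffInl u (lieDerivation b x P) = 0 := by
  induction b.mem_span x using Submodule.span_induction with
  | mem _ h =>
    obtain ⟨α | i, rfl⟩ := h
    · rw [← hneg α, hP.coeffInl_lowering _ u hu]
    · rw [hP.lieDerivation_inr, map_zero]
  | zero => rw [map_zero, Derivation.zero_apply, map_zero]
  | add _ _ _ _ hx hy => rw [map_add, Derivation.add_apply, map_add, hx, hy, add_zero]
  | smul a _ _ hx => rw [map_smul, Derivation.smul_apply, map_smul, hx, smul_zero]

namespace IsRootBasis

lemma coroot_mul_coeffInl_lowering (H : IsRootBasis b rt ct neg c)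
    (hP : IsApproxLift b neg d M f P) (α β : Φ) {u : Φ →₀ ℕ} (hu : u.degree < M) :
    C (c α * (u α + 1)) * linearForm (ct α) *
        coeffInl (u + Finsupp.single α 1) (lowering b neg β P) =
      C (c β * (u β + 1)) * linearForm (ct β) *
        coeffInl (u + Finsupp.single β 1) (lowering b neg α P) := by
  rw [← H.coeffInl_lowering_of_forall_degree_le α u (lowering b neg β P)
      fun w hw => hP.coeffInl_lowering β w (hw.trans_lt hu),
    ← H.coeffInl_lowering_of_forall_degree_le β u (lowering b neg α P)
      fun w hw => hP.coeffInl_lowering α w (hw.trans_lt hu),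
    ← sub_eq_zero, ← map_sub, ← Derivation.commutator_apply, ← LieHom.map_lie]
  exact hP.coeffInl_lieDerivation H.neg_neg _ hu

lemma weight_add_root_eq_zero (H : IsRootBasis b rt ct neg c)
    (hP : ∀ i, lieDerivation b (b (.inr i)) P = 0) {α : Φ} {v : Φ →₀ ℕ}
    (hv : coeffInl v (lowering b neg α P) ≠ 0) : Finsupp.weight rt v + rt α = 0 := by
  funext i
  have hlie := congrArg (coeffInl v <| · P)
    (LieHom.map_lie (lieDerivation b) (b (.inr i)) (b (.inl (neg α))))
  rw [H.lie_inr_inl, H.root_neg, map_smul, Derivation.smul_apply, Derivation.commutator_apply,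
    hP, map_zero, sub_zero, H.coeffInl_lieDerivation_inr, map_smul, smul_eq_C_mul] at hlie
  have hC := mul_right_cancel₀ hv hlie
  rw [C_inj, Pi.neg_apply] at hC
  rw [Pi.add_apply, ← hC, neg_add_cancel, Pi.zero_apply]

lemma isApproxLift_rename (H : IsRootBasis b rt ct neg c) (hd : f.totalDegree ≤ d) :
    IsApproxLift b neg d 0 f (rename Sum.inr f) where
  coeffInl_zero := by
    classical rw [coeffInl_rename_inr, if_pos rfl]
  totalDegree_le := (totalDegree_rename_le _ _).trans hd
  lieDerivation_inr i := coeffInl_ext fun u => by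
    classical
    rw [H.coeffInl_lieDerivation_inr, map_zero, coeffInl_rename_inr]
    split_ifs with hu
    · rw [hu, map_zero, Pi.zero_apply, C_0, zero_mul]
    · rw [mul_zero]
  coeffInl_lowering _ _ hv := absurd hv (Nat.not_lt_zero _)

variable [CharZero k]

lemma reflection_coeffInl_pairExponent (H : IsRootBasis b rt ct neg c) (hf : f ∈ invariants rt ct)
    (hP : IsApproxLift b neg d M f P) (α : Φ) {a : ℕ} (ha : a + a ≤ M) :
    reflection (rt α) (ct α) (coeffInl (pairExponent neg α a) P) =
      coeffInl (pairExponent neg α a) P := by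
  induction a with
  | zero => rw [pairExponent_zero, hP.coeffInl_zero, hf α]
  | succ a ih =>
    refine (reflection_eq_self_iff (H.root_dotProduct_coroot α)
      (mul_ne_zero (H.scalar_ne_zero α) a.cast_add_one_ne_zero) ?_).mpr (ih (by omega))
    rw [← H.coeffInl_lowering_pairExponent, hP.coeffInl_lowering]
    rw [map_add, degree_pairExponent, Finsupp.degree_single]
    omega

lemma coroot_dvd_coeffInl_lowering (H : IsRootBasis b rt ct neg c) (hf : f ∈ invariants rt ct)
    (hP : IsApproxLift b neg d M f P) (α : Φ) {v : Φ →₀ ℕ} (hv : v.degree = M) :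
    linearForm (ct α) ∣ coeffInl v (lowering b neg α P) := by
  by_cases hsupp : ∃ β, β ≠ α ∧ β ≠ neg α ∧ v β ≠ 0
  · obtain ⟨β, hβα, hβα', hβ⟩ := hsupp
    have hdeg := degree_sub_single_add hβ
    have hcomm := H.coroot_mul_coeffInl_lowering hP α β (u := v - Finsupp.single β 1) (by omega)
    rw [Finsupp.sub_add_single_one_cancel hβ, mul_assoc, mul_left_comm, mul_assoc (C _)] at hcomm
    refine linearForm_dvd_of_dvd_linearForm_mul
      (ne_zero_of_dotProduct_eq_two (H.root_dotProduct_coroot α))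
      (H.coroot_ne_smul α β hβα hβα') ?_
    have hunit : IsUnit (c β * (((v - Finsupp.single β 1 : Φ →₀ ℕ) β : k) + 1)) :=
      (mul_ne_zero (H.scalar_ne_zero β) (Nat.cast_add_one_ne_zero _)).isUnit
    exact (hunit.map C).dvd_mul_left.mp (Dvd.intro _ hcomm)
  · push Not at hsupp
    by_cases h0 : coeffInl v (lowering b neg α P) = 0
    · exact h0 ▸ dvd_zero _
    have hexp := H.eq_pairExponent_add_single hsupp
      (H.weight_add_root_eq_zero hP.lieDerivation_inr h0)
    have hdeg := congrArg Finsupp.degree hexp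
    rw [map_add, degree_pairExponent, Finsupp.degree_single, hv] at hdeg
    rw [hexp, H.coeffInl_lowering_pairExponent]
    refine dvd_add (Dvd.intro_left _ rfl |>.mul_right _) ?_
    refine linearForm_dvd_of_reflection_eq_neg (f := rt α) ?_
    rw [reflection_dirDeriv (H.root_dotProduct_coroot α),
      H.reflection_coeffInl_pairExponent hf hP α (by omega)]

lemma exists_coroot_mul_eq_coeffInl_lowering (H : IsRootBasis b rt ct neg c)
    (hf : f ∈ invariants rt ct) (hP : IsApproxLift b neg d M f P) (w : Φ →₀ ℕ)
    (hw : w.degree = M + 1) :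
    ∃ q : MvPolynomial ι k, ∀ α v, w = v + Finsupp.single α 1 →
      C (c α * (v α + 1)) * linearForm (ct α) * q = coeffInl v (lowering b neg α P) := by
  obtain ⟨α, v, hv, rfl⟩ := exists_eq_add_single_of_degree hw
  have hα : c α * (v α + 1) ≠ 0 := mul_ne_zero (H.scalar_ne_zero α) (v α).cast_add_one_ne_zero
  obtain ⟨q, hq⟩ : C (c α * (v α + 1)) * linearForm (ct α) ∣ coeffInl v (lowering b neg α P) :=
    (hα.isUnit.map C).mul_left_dvd.mpr (H.coroot_dvd_coeffInl_lowering hf hP α hv)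
  refine ⟨q, fun β v' hv' => ?_⟩
  obtain rfl | hβα := eq_or_ne β α
  · rw [← add_right_cancel hv', hq]
  -- The commutation of the two lowering operators makes the quotient independent of the root.
  obtain ⟨u, rfl⟩ : ∃ u, v = u + Finsupp.single β 1 := by
    refine ⟨v - Finsupp.single β 1, (Finsupp.sub_add_single_one_cancel fun hβ => ?_).symm⟩
    simpa [hβ, hβα.symm] using DFunLike.congr_fun hv' β
  obtain rfl : u + Finsupp.single α 1 = v' := by
    rw [add_right_comm] at hv'
    exact add_right_cancel hv'
  have hu : u.degree < M := by
    rw [← hv, map_add, Finsupp.degree_single]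
    omega
  have hcomm := H.coroot_mul_coeffInl_lowering hP α β hu
  have huα : (u + Finsupp.single β 1 : Φ →₀ ℕ) α = u α := by simp [hβα]
  have huβ : (u + Finsupp.single α 1 : Φ →₀ ℕ) β = u β := by simp [hβα.symm]
  rw [huα] at hq hα
  rw [hq] at hcomm
  rw [huβ]
  refine mul_left_cancel₀ (mul_ne_zero (C_ne_zero.mpr hα) (H.linearForm_coroot_ne_zero α)) ?_
  rw [hcomm]
  ring

variable {Q : MvPolynomial (Φ ⊕ ι) k}

lemma exists_lowering_ne_zero (H : IsRootBasis b rt ct neg c)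
    (hQ : ∀ α v, v.degree = M → C (c α * (v α + 1)) * linearForm (ct α) *
      coeffInl (v + Finsupp.single α 1) Q = coeffInl v (lowering b neg α P))
    {u : Φ →₀ ℕ} (hu : u.degree = M + 1) (hne : coeffInl u Q ≠ 0) :
    ∃ α v, u = v + Finsupp.single α 1 ∧ coeffInl v (lowering b neg α P) ≠ 0 ∧
      (coeffInl v (lowering b neg α P)).totalDegree = 1 + (coeffInl u Q).totalDegree := by
  obtain ⟨α, v, hv, rfl⟩ := exists_eq_add_single_of_degree hu
  have hC : C (c α * (v α + 1)) ≠ 0 :=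
    C_ne_zero (σ := ι).mpr (mul_ne_zero (H.scalar_ne_zero α) (v α).cast_add_one_ne_zero)
  have hl := H.linearForm_coroot_ne_zero α
  refine ⟨α, v, rfl, ?_, ?_⟩ <;> rw [← hQ α v hv]
  · exact mul_ne_zero (mul_ne_zero hC hl) hne
  · rw [totalDegree_mul_of_isDomain (mul_ne_zero hC hl) hne, totalDegree_mul_of_isDomain hC hl,
      totalDegree_C, (linearForm_isHomogeneous _).totalDegree hl, zero_add]

lemma isApproxLift_sub (H : IsRootBasis b rt ct neg c) (hP : IsApproxLift b neg d M f P)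
    (hQ0 : ∀ u : Φ →₀ ℕ, u.degree ≠ M + 1 → coeffInl u Q = 0)
    (hQ : ∀ α v, v.degree = M → C (c α * (v α + 1)) * linearForm (ct α) *
      coeffInl (v + Finsupp.single α 1) Q = coeffInl v (lowering b neg α P)) :
    IsApproxLift b neg d (M + 1) f (P - Q) where
  coeffInl_zero := by
    rw [map_sub, hP.coeffInl_zero, hQ0 0 (by rw [map_zero]; omega), sub_zero]
  totalDegree_le := by
    refine (totalDegree_sub _ _).trans (max_le hP.totalDegree_le ?_)
    refine totalDegree_le_iff_coeffInl.mpr fun u hu => ?_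
    have hdeg : u.degree = M + 1 := not_imp_comm.mp (hQ0 u) hu
    obtain ⟨α, v, rfl, hne, htot⟩ := H.exists_lowering_ne_zero hQ hdeg hu
    have := totalDegree_le_iff_coeffInl.mp
      ((totalDegree_lieDerivation_le b _ P).trans hP.totalDegree_le) v hne
    rw [map_add, Finsupp.degree_single] at hdeg ⊢
    rw [htot] at this
    omega
  lieDerivation_inr i := by
    rw [map_sub, hP.lieDerivation_inr, zero_sub, neg_eq_zero]
    refine coeffInl_ext fun u => ?_
    rw [H.coeffInl_lieDerivation_inr, map_zero]
    by_cases hu : coeffInl u Q = 0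
    · rw [hu, mul_zero]
    obtain ⟨α, v, rfl, hne, -⟩ := H.exists_lowering_ne_zero hQ (not_imp_comm.mp (hQ0 u) hu) hu
    rw [map_add, Finsupp.weight_single, one_smul,
      H.weight_add_root_eq_zero hP.lieDerivation_inr hne, Pi.zero_apply, C_0, zero_mul]
  coeffInl_lowering α v hv := by
    rw [map_sub, map_sub, H.coeffInl_lowering_of_forall_degree_le α v Q
      fun w hw => hQ0 w (by omega), sub_eq_zero]
    obtain hlt | rfl := (Nat.lt_succ_iff.mp hv).lt_or_eq
    · rw [hP.coeffInl_lowering α v hlt, hQ0, mul_zero]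
      rw [map_add, Finsupp.degree_single]
      omega
    · exact (hQ α v rfl).symm

lemma exists_isApproxLift (H : IsRootBasis b rt ct neg c) (hf : f ∈ invariants rt ct)
    (hd : f.totalDegree ≤ d) (M : ℕ) : ∃ P, IsApproxLift b neg d M f P := by
  classical
  induction M with
  | zero => exact ⟨_, H.isApproxLift_rename hd⟩
  | succ M ih =>
    obtain ⟨P, hP⟩ := ih
    choose! q hq using H.exists_coroot_mul_eq_coeffInl_lowering hf hP
    obtain ⟨Q, hQ, hQ0⟩ := exists_coeffInl_eq q (Finset.univ.finsuppAntidiag (M + 1))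
    have hmem (u : Φ →₀ ℕ) : u ∈ Finset.univ.finsuppAntidiag (M + 1) ↔ u.degree = M + 1 := by
      rw [Finset.mem_finsuppAntidiag, Finsupp.degree_eq_sum]
      exact and_iff_left (Finset.subset_univ _)
    refine ⟨P - Q, H.isApproxLift_sub hP (fun u hu => hQ0 u fun h => hu ((hmem u).mp h))
      fun α v hv => ?_⟩
    have hdeg : (v + Finsupp.single α 1).degree = M + 1 := by
      rw [map_add, Finsupp.degree_single, hv]
    rw [hQ _ ((hmem _).mpr hdeg), hq _ hdeg α v rfl]

lemma exists_mem_adjointInvariants (H : IsRootBasis b rt ct neg c) (hf : f ∈ invariants rt ct) :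
    ∃ P ∈ adjointInvariants b, coeffInl 0 P = f ∧ P.totalDegree ≤ f.totalDegree := by
  obtain ⟨P, hP⟩ := H.exists_isApproxLift hf le_rfl (f.totalDegree + 1)
  refine ⟨P, fun x => coeffInl_ext fun u => ?_, hP.coeffInl_zero, hP.totalDegree_le⟩
  rw [map_zero]
  by_cases hu : u.degree < f.totalDegree + 1
  · exact hP.coeffInl_lieDerivation H.neg_neg x hu
  · have := (totalDegree_lieDerivation_le b x P).trans hP.totalDegree_le
    exact coeffInl_eq_zero_of_totalDegree_lt (by omega)

end IsRootBasis

end ApproxLift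

/-! ### Freeness over the center -/

section Center

variable {k L I : Type*} [Field k] [CharZero k] [LieRing L] [LieAlgebra k L] [Fintype I]
  (b : Module.Basis I k L)

lemma envelopingSymmetrization_surjective : Function.Surjective (envelopingSymmetrization b) := by
  intro a
  have hb : IsAlmostCommutative k (envelopingGenerator b) 1 :=
    isAlmostCommutative_envelopingGenerator b fun _ _ _ => Nat.lt_add_one 1
  obtain ⟨m, hm⟩ := exists_mem_wordFiltration (w := 1) (adjoin_range_envelopingGenerator b) a
  obtain ⟨p, -, hp⟩ := wordFiltration_le_map_symmetrization hb m hm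
  exact ⟨p, hp⟩

variable {b}

lemma envelopingSymmetrization_mem_center_iff
    (hb : Function.Injective (envelopingSymmetrization b)) {p : MvPolynomial I k} :
    envelopingSymmetrization b p ∈ Subalgebra.center k (UniversalEnvelopingAlgebra k L) ↔
      p ∈ adjointInvariants b := by
  have hx (x : L) : lieDerivation b x p = 0 ↔ Commute (UniversalEnvelopingAlgebra.ι k x)
      (envelopingSymmetrization b p) := by
    rw [← map_eq_zero_iff _ hb, ← ι_mul_envelopingSymmetrization_sub, sub_eq_zero]
    rfl
  rw [Subalgebra.mem_center_iff]
  refine ⟨fun h x => (hx x).mpr (h _), fun h a => ?_⟩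
  have ha : a ∈ Subalgebra.centralizer k {envelopingSymmetrization b p} := by
    have hle := Algebra.adjoin_le (S := Subalgebra.centralizer k {envelopingSymmetrization b p})
      (Set.range_subset_iff.mpr fun x => (Subalgebra.mem_centralizer_iff k).mpr
        (by rintro _ rfl; exact ((hx x).mp (h x)).symm))
    exact hle (adjoin_range_ι (k := k) (L := L) ▸ Algebra.mem_top)
  exact ((Subalgebra.mem_centralizer_iff k).mp ha _ rfl).symm

variable (hb : Function.Injective (envelopingSymmetrization b))

/-- Symmetrization identifies the adjoint invariants with the center of the enveloping algebra. -/
noncomputable def adjointInvariantsEquivCenter :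
    adjointInvariants b ≃ₗ[k] Subalgebra.center k (UniversalEnvelopingAlgebra k L) :=
  .ofBijective (LinearMap.restrict (p := (adjointInvariants b).toSubmodule)
    (q := (Subalgebra.center k _).toSubmodule) (envelopingSymmetrization b)
    fun _ => (envelopingSymmetrization_mem_center_iff hb).mpr)
    ⟨fun _ _ h => Subtype.ext (hb (congrArg Subtype.val h)), fun z => by
      obtain ⟨p, hp⟩ := envelopingSymmetrization_surjective b z
      exact ⟨⟨p, (envelopingSymmetrization_mem_center_iff hb).mp (hp ▸ z.2)⟩, Subtype.ext hp⟩⟩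

lemma coe_adjointInvariantsEquivCenter (p : adjointInvariants b) :
    (adjointInvariantsEquivCenter hb p : UniversalEnvelopingAlgebra k L) =
      envelopingSymmetrization b p := rfl

end Center

section FilteredMap

lemma bijective_of_sub_mem_map {k M N : Type*} [Ring k] [AddCommGroup M] [Module k M]
    [AddCommGroup N] [Module k N] {F : ℕ → Submodule k M} (hF : ∀ x, ∃ n, x ∈ F n)
    (hF0 : F 0 = ⊥) {f g : M →ₗ[k] N} (hg : Function.Bijective g)
    (hfg : ∀ n, ∀ x ∈ F (n + 1), f x - g x ∈ (F n).map g) : Function.Bijective f := by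
  constructor
  · rw [← LinearMap.ker_eq_bot, Submodule.eq_bot_iff]
    intro x hx
    obtain ⟨n, hn⟩ := hF x
    induction n with
    | zero => rwa [hF0, Submodule.mem_bot] at hn
    | succ n ih =>
      obtain ⟨y, hy, hyx⟩ := hfg n x hn
      rw [LinearMap.mem_ker.mp hx, zero_sub, ← map_neg] at hyx
      exact ih (neg_mem_iff.mp (hg.injective hyx ▸ hy))
  · have hrange (n : ℕ) : (F n).map g ≤ LinearMap.range f := by
      induction n with
      | zero => rw [hF0, Submodule.map_bot]; exact bot_le
      | succ n ih =>
        rintro _ ⟨x, hx, rfl⟩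
        rw [← sub_sub_cancel (f x) (g x)]
        exact sub_mem ⟨x, rfl⟩ (ih (hfg n x hx))
    intro y
    obtain ⟨x, rfl⟩ := hg.surjective y
    obtain ⟨n, hn⟩ := hF x
    exact hrange n ⟨x, hn, rfl⟩

end FilteredMap

section RootWeight

variable {k Φ ι : Type*} [Field k]

/-- The weights of the filtrations on `Sym L` and `U(L)`: those of the root vectors are smaller
than those of the Cartan elements, yet any weight is smaller than the sum of two others. -/
def rootWeight (Φ ι : Type*) : Φ ⊕ ι → ℕ := Sum.elim (fun _ => 2) fun _ => 3

lemma rootWeight_lt_add (i j l : Φ ⊕ ι) :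
    rootWeight Φ ι l < rootWeight Φ ι i + rootWeight Φ ι j := by
  rcases i <;> rcases j <;> rcases l <;> simp [rootWeight]

lemma weight_sumElim (u : Φ →₀ ℕ) (s : ι →₀ ℕ) :
    Finsupp.weight (rootWeight Φ ι) (u.sumElim s) = 2 * u.degree + 3 * s.degree := by
  simp [Finsupp.weight_apply, rootWeight, Finsupp.degree_apply,
    Finsupp.sum, Finset.mul_sum, mul_comm]

lemma mem_wordFiltration_X {I : Type*} {w : I → ℕ} {p : MvPolynomial I k} {m : ℕ}
    (h : ∀ s, coeff s p ≠ 0 → Finsupp.weight w s < m) : p ∈ wordFiltration k X w m := by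
  rw [p.as_sum]
  exact sum_mem fun s hs => monomial_mem_wordFiltration (h s (mem_support_iff.mp hs)) _

lemma sub_rename_coeffInl_zero_mem (p : MvPolynomial (Φ ⊕ ι) k) :
    p - rename Sum.inr (coeffInl 0 p) ∈
      wordFiltration k X (rootWeight Φ ι) (3 * p.totalDegree) := by
  classical
  refine mem_wordFiltration_X fun s hs => ?_
  rw [← Finsupp.comapDomain_sumElim_comapDomain s] at hs ⊢
  generalize s.comapDomain Sum.inl _ = u, s.comapDomain Sum.inr _ = t at hs ⊢
  rw [← coeff_coeffInl, map_sub, coeffInl_rename_inr] at hs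
  split_ifs at hs with hu
  · rw [hu, sub_self, coeff_zero] at hs
    exact absurd rfl hs
  · rw [sub_zero, coeff_coeffInl] at hs
    have hdeg := totalDegree_le_iff_degree_le.mp le_rfl _ hs
    have hpos : u.degree ≠ 0 := (Finsupp.degree_eq_zero_iff u).not.mpr hu
    rw [degree_sumElim] at hdeg
    rw [weight_sumElim]
    omega

lemma rename_inr_mem_wordFiltration (q : MvPolynomial ι k) :
    rename Sum.inr q ∈ wordFiltration k X (rootWeight Φ ι) (3 * q.totalDegree + 1) := by
  classical
  refine mem_wordFiltration_X fun s hs => ?_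
  rw [← Finsupp.comapDomain_sumElim_comapDomain s] at hs ⊢
  generalize s.comapDomain Sum.inl _ = u, s.comapDomain Sum.inr _ = t at hs ⊢
  rw [← coeff_coeffInl, coeffInl_rename_inr] at hs
  split_ifs at hs with hu
  · have hdeg := totalDegree_le_iff_degree_le.mp le_rfl _ hs
    rw [weight_sumElim, hu, map_zero]
    omega
  · exact absurd (coeff_zero _) hs

end RootWeight

section Kostant

variable {k L Φ ι : Type*} [Field k] [CharZero k] [LieRing L] [LieAlgebra k L] [Fintype ι]
  [Fintype Φ] {b : Module.Basis (Φ ⊕ ι) k L} {rt ct : Φ → ι → k} {neg : Φ → Φ} {c : Φ → k}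

namespace IsRootBasis

/-- The Chevalley restriction isomorphism from the adjoint invariants of `Sym L` onto the Weyl
group invariants of the symmetric algebra of the Cartan subalgebra. -/
noncomputable def restrictionEquiv (H : IsRootBasis b rt ct neg c) :
    adjointInvariants b ≃ₗ[k] invariants rt ct :=
  .ofBijective (LinearMap.restrict (p := (adjointInvariants b).toSubmodule)
    (q := (invariants rt ct).toSubmodule) (coeffInl 0) fun _ => H.coeffInl_zero_mem_invariants)
    ⟨(injective_iff_map_eq_zero _).mpr fun p hp => Subtype.ext
        (H.eq_zero_of_coeffInl_zero_eq_zero p.2 (congrArg Subtype.val hp)), fun r => by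
      obtain ⟨p, hp, hpr, -⟩ := H.exists_mem_adjointInvariants r.2
      exact ⟨⟨p, hp⟩, Subtype.ext hpr⟩⟩

lemma coeffInl_restrictionEquiv_symm (H : IsRootBasis b rt ct neg c) (r : invariants rt ct) :
    coeffInl 0 (H.restrictionEquiv.symm r : MvPolynomial (Φ ⊕ ι) k) = r :=
  congrArg Subtype.val (H.restrictionEquiv.apply_symm_apply r)

lemma totalDegree_restrictionEquiv_symm_le (H : IsRootBasis b rt ct neg c)
    (r : invariants rt ct) :
    (H.restrictionEquiv.symm r : MvPolynomial (Φ ⊕ ι) k).totalDegree ≤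
      (r : MvPolynomial ι k).totalDegree := by
  obtain ⟨p, hp, hpr, hdeg⟩ := H.exists_mem_adjointInvariants r.2
  rwa [show H.restrictionEquiv.symm r = ⟨p, hp⟩ from
    H.restrictionEquiv.symm_apply_eq.mpr (Subtype.ext hpr.symm)]

variable (hb : Function.Injective (envelopingSymmetrization b))

/-- The linear isomorphism underlying the Harish-Chandra isomorphism, up to filtration. -/
noncomputable def invariantsEquivCenter (H : IsRootBasis b rt ct neg c) :
    invariants rt ct ≃ₗ[k] Subalgebra.center k (UniversalEnvelopingAlgebra k L) :=
  H.restrictionEquiv.symm.trans (adjointInvariantsEquivCenter hb)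

lemma invariantsEquivCenter_mul_sub_mem (H : IsRootBasis b rt ct neg c) (r : invariants rt ct)
    {s : Φ ⊕ ι →₀ ℕ} {n : ℕ}
    (hn : 3 * (r : MvPolynomial ι k).totalDegree + Finsupp.weight (rootWeight Φ ι) s ≤ n) :
    (H.invariantsEquivCenter hb r : UniversalEnvelopingAlgebra k L) *
        envelopingSymmetrization b (monomial s 1) -
      envelopingSymmetrization b (rename Sum.inr r * monomial s 1) ∈
        wordFiltration k (envelopingGenerator b) (rootWeight Φ ι) n := by
  set a := (r : MvPolynomial ι k).totalDegree
  set m : MvPolynomial (Φ ⊕ ι) k := monomial s 1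
  have hm : m ∈ wordFiltration k X (rootWeight Φ ι) (Finsupp.weight (rootWeight Φ ι) s + 1) :=
    monomial_mem_wordFiltration (Nat.lt_succ_self _) 1
  obtain ⟨p, hp⟩ : ∃ p, p = (H.restrictionEquiv.symm r : MvPolynomial (Φ ⊕ ι) k) := ⟨_, rfl⟩
  have hdeg : p.totalDegree ≤ a := hp ▸ H.totalDegree_restrictionEquiv_symm_le r
  have hlow : p - rename Sum.inr (r : MvPolynomial ι k) ∈
      wordFiltration k X (rootWeight Φ ι) (3 * a) := by
    have hsub := sub_rename_coeffInl_zero_mem p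
    rw [hp, H.coeffInl_restrictionEquiv_symm, ← hp] at hsub
    exact wordFiltration_mono _ _ (Nat.mul_le_mul_left 3 hdeg) hsub
  have hpmem : p ∈ wordFiltration k X (rootWeight Φ ι) (3 * a + 1) := by
    rw [← sub_add_cancel p (rename Sum.inr (r : MvPolynomial ι k))]
    exact add_mem (wordFiltration_mono _ _ (Nat.le_succ _) hlow)
      (rename_inr_mem_wordFiltration _)
  have hsplit : (H.invariantsEquivCenter hb r : UniversalEnvelopingAlgebra k L) *
        envelopingSymmetrization b m - envelopingSymmetrization b (rename Sum.inr r * m) =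
      (envelopingSymmetrization b p * envelopingSymmetrization b m -
        envelopingSymmetrization b (p * m)) +
      envelopingSymmetrization b ((p - rename Sum.inr (r : MvPolynomial ι k)) * m) := by
    rw [invariantsEquivCenter, LinearEquiv.trans_apply, coe_adjointInvariantsEquivCenter, ← hp,
      sub_mul, map_sub, sub_add_sub_cancel]
  rw [hsplit]
  refine add_mem (wordFiltration_mono _ _ hn ?_) ?_
  · exact symmetrization_mul_symmetrization_sub_mem
      (isAlmostCommutative_envelopingGenerator b rootWeight_lt_add) hpmem hm
  · exact symmetrization_mem_wordFiltration (mul_mem_wordFiltration (by omega) hlow hm)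

end IsRootBasis

end Kostant

section FreeCenter

variable {k L Φ ι : Type*} [Field k]

lemma monomial_sumElim (u : Φ →₀ ℕ) (s : ι →₀ ℕ) :
    (monomial (u.sumElim s) 1 : MvPolynomial (Φ ⊕ ι) k) =
      rename Sum.inr (monomial s 1) * rename Sum.inl (monomial u 1) := by
  rw [rename_monomial, rename_monomial, monomial_mul, one_mul, add_comm, Finsupp.sumElim_eq_add]

lemma exists_equiv_finsupp {J : Subalgebra k (MvPolynomial ι k)} {E : Set (ι →₀ ℕ)}
    (B : Module.Basis E J (MvPolynomial ι k)) (hB : ∀ e, B e = monomial e.1 1) :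
    ∃ Θ : MvPolynomial (Φ ⊕ ι) k ≃ₗ[k] (E × (Φ →₀ ℕ) →₀ J), ∀ e u (r : J),
      Θ (rename Sum.inr (r : MvPolynomial ι k) * monomial (u.sumElim e.1) 1) =
        Finsupp.single (e, u) r := by
  let D := B.smulTower (basisMonomials Φ (MvPolynomial ι k))
  refine ⟨(sumAlgEquiv k Φ ι).toLinearEquiv.trans (D.repr.restrictScalars k), fun e u r => ?_⟩
  have hu : sumAlgEquiv k Φ ι (rename Sum.inl (monomial u 1)) = monomial u 1 := by
    have := DFunLike.congr_fun (sumAlgEquiv_comp_rename_inl (R := k) (S₁ := Φ) (S₂ := ι))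
      (monomial u 1)
    simpa using this
  have hD : sumAlgEquiv k Φ ι
      (rename Sum.inr (r : MvPolynomial ι k) * monomial (u.sumElim e.1) 1) = r • D (e, u) := by
    rw [monomial_sumElim, map_mul, map_mul, sumAlgEquiv_rename_inr, sumAlgEquiv_rename_inr, hu,
      C_mul', C_mul', Module.Basis.smulTower_apply, hB, coe_basisMonomials, Subalgebra.smul_def]
  exact (congrArg D.repr hD).trans (by rw [map_smul, D.repr_self, Finsupp.smul_single_one])

lemma wordFiltration_X_le_span {J : Subalgebra k (MvPolynomial ι k)} {E : Set (ι →₀ ℕ)}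
    (hE : ∀ d, ∀ q : MvPolynomial ι k, q.IsHomogeneous d → q ∈ Submodule.span k
      {p | ∃ a, ∃ e ∈ E, a + e.degree = d ∧ ∃ r ∈ J, r.IsHomogeneous a ∧ p = r * monomial e 1})
    (n : ℕ) : wordFiltration k X (rootWeight Φ ι) (n + 1) ≤ Submodule.span k
      {p | ∃ e ∈ E, ∃ u : Φ →₀ ℕ, ∃ r ∈ J,
        3 * r.totalDegree + Finsupp.weight (rootWeight Φ ι) (u.sumElim e) ≤ n ∧
          p = rename Sum.inr r * monomial (u.sumElim e) 1} := by
  rw [wordFiltration_X_eq_span, Submodule.span_le]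
  rintro _ ⟨s, hs, rfl⟩
  dsimp only
  rw [Set.mem_ofPred_eq, ← Finsupp.comapDomain_sumElim_comapDomain s] at hs
  rw [← Finsupp.comapDomain_sumElim_comapDomain s]
  generalize s.comapDomain Sum.inl _ = u, s.comapDomain Sum.inr _ = t at hs ⊢
  rw [weight_sumElim] at hs
  rw [monomial_sumElim]
  refine (Submodule.span_le (p := (Submodule.span k _).comap
    (LinearMap.mulRight k (rename Sum.inl (monomial u 1)) ∘ₗ (rename Sum.inr).toLinearMap))).mpr ?_
    (hE _ _ (isHomogeneous_monomial (1 : k) (rfl : t.degree = t.degree)))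
  rintro _ ⟨a, e, he, hae, r, hr, hra, rfl⟩
  refine Submodule.subset_span ⟨e, he, u, r, hr, ?_, ?_⟩
  · have := hra.totalDegree_le
    rw [weight_sumElim]
    omega
  · rw [monomial_sumElim, ← mul_assoc, ← map_mul]
    rfl

variable [CharZero k] [LieRing L] [LieAlgebra k L] [Fintype ι]
  [Fintype Φ] {b : Module.Basis (Φ ⊕ ι) k L} {rt ct : Φ → ι → k} {neg : Φ → Φ} {c : Φ → k}

lemma IsRootBasis.bijective_of_apply_eq_center_mul (H : IsRootBasis b rt ct neg c)
    (hb : Function.Injective (envelopingSymmetrization b)) {E : Set (ι →₀ ℕ)}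
    (hE : ∀ d, ∀ q : MvPolynomial ι k, q.IsHomogeneous d → q ∈ Submodule.span k
      {p | ∃ a, ∃ e ∈ E, a + e.degree = d ∧ ∃ r ∈ invariants rt ct, r.IsHomogeneous a ∧
        p = r * monomial e 1})
    {f : MvPolynomial (Φ ⊕ ι) k →ₗ[k] UniversalEnvelopingAlgebra k L}
    (hf : ∀ e ∈ E, ∀ (u : Φ →₀ ℕ) (r : invariants rt ct),
      f (rename Sum.inr (r : MvPolynomial ι k) * monomial (u.sumElim e) 1) =
        H.invariantsEquivCenter hb r * envelopingSymmetrization b (monomial (u.sumElim e) 1)) :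
    Function.Bijective f := by
  refine bijective_of_sub_mem_map (F := wordFiltration k X (rootWeight Φ ι))
    (g := envelopingSymmetrization b) (exists_mem_wordFiltration adjoin_range_X)
    (wordFiltration_zero ..) ⟨hb, envelopingSymmetrization_surjective b⟩ fun n x hx => ?_
  refine wordFiltration_le_map_symmetrization
    (isAlmostCommutative_envelopingGenerator b rootWeight_lt_add) n ?_
  refine (Submodule.span_le (p := (wordFiltration k (envelopingGenerator b) (rootWeight Φ ι)
    n).comap (f - envelopingSymmetrization b))).mpr ?_ (wordFiltration_X_le_span hE n hx)
  rintro _ ⟨e, he, u, r, hr, hn, rfl⟩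
  rw [SetLike.mem_coe, Submodule.mem_comap, LinearMap.sub_apply, hf e he u ⟨r, hr⟩]
  exact H.invariantsEquivCenter_mul_sub_mem hb ⟨r, hr⟩ hn

theorem IsRootBasis.free_center (H : IsRootBasis b rt ct neg c) [Finite (reflectionMonoid rt ct)]
    (hb : Function.Injective (envelopingSymmetrization b)) :
    Module.Free (Subalgebra.center k (UniversalEnvelopingAlgebra k L))
      (UniversalEnvelopingAlgebra k L) := by
  obtain ⟨E, B, hB, hE⟩ := exists_basis_monomial_over_invariants H.root_dotProduct_coroot
  obtain ⟨Θ, hΘ⟩ := exists_equiv_finsupp (Φ := Φ) B hB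
  let φ := H.invariantsEquivCenter hb
  let V := Finsupp.linearCombination (Subalgebra.center k (UniversalEnvelopingAlgebra k L))
    fun x : E × (Φ →₀ ℕ) => envelopingSymmetrization b (monomial (x.2.sumElim x.1.1) 1)
  let e := Θ.trans (Finsupp.mapRange.linearEquiv φ)
  have hf (a : ι →₀ ℕ) (ha : a ∈ E) (u : Φ →₀ ℕ) (r : invariants rt ct) :
      V (e (rename Sum.inr (r : MvPolynomial ι k) * monomial (u.sumElim a) 1)) =
        φ r * envelopingSymmetrization b (monomial (u.sumElim a) 1) := by
    rw [LinearEquiv.trans_apply, hΘ ⟨a, ha⟩ u r, Finsupp.mapRange.linearEquiv_apply,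
      Finsupp.mapRange_single, Finsupp.linearCombination_single]
    rfl
  have hVe : Function.Bijective (V ∘ e) :=
    H.bijective_of_apply_eq_center_mul hb hE (f := V.restrictScalars k ∘ₗ e.toLinearMap) hf
  have hV : Function.Bijective V := (Function.Bijective.of_comp_iff V e.bijective).mp hVe
  exact .of_basis (.ofRepr (LinearEquiv.ofBijective V hV).symm)

end FreeCenter

/-! ### The root basis attached to a splitting Cartan subalgebra -/

section CartanSubalgebra

open LieAlgebra LieAlgebra.IsKilling LieModule Module

lemma constr_symm_dotProduct_equivFun {k V ι : Type*} [Field k] [AddCommGroup V] [Module k V]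
    [Fintype ι] (h : Basis ι k V) (f : Dual k V) (x : V) :
    (h.constr k).symm f ⬝ᵥ h.equivFun x = f x := by
  conv_rhs => rw [← h.sum_equivFun x, map_sum]
  refine Finset.sum_congr rfl fun i _ => ?_
  rw [map_smul, smul_eq_mul, mul_comm]
  rfl

variable {k L : Type*} [Field k] [LieRing L] [LieAlgebra k L] [FiniteDimensional k L]
  (H : LieSubalgebra k L) [H.IsCartanSubalgebra]

/-- A chosen nonzero vector of the root space of `α`. -/
noncomputable def rootVector (α : H.root) : L := α.1.exists_ne_zero.choose

variable {H}

lemma rootVector_mem (α : H.root) : rootVector H α ∈ rootSpace H α.1 :=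
  α.1.exists_ne_zero.choose_spec.1

lemma rootVector_ne_zero (α : H.root) : rootVector H α ≠ 0 :=
  α.1.exists_ne_zero.choose_spec.2

lemma coe_mem_rootSpace_zero (x : H) : (x : L) ∈ rootSpace H (0 : H → k) := by
  rw [rootSpace_zero_eq k L H]
  exact x.2

variable {ι : Type*} (h : Basis ι k H)

lemma linearIndependent_rootVector_sumElim :
    LinearIndependent k (Sum.elim (rootVector H) fun i => (h i : L)) := by
  have hind : iSupIndep fun χ : H → k => (rootSpace H χ).toSubmodule :=
    LieSubmodule.iSupIndep_toSubmodule.mpr (iSupIndep_genWeightSpace k H L)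
  refine LinearIndependent.sum_type ?_ ?_ ?_
  · refine iSupIndep.linearIndependent (fun α : H.root => (rootSpace H α.1).toSubmodule)
      (hind.comp (f := fun α : H.root => (α.1 : H → k)) ?_) rootVector_mem rootVector_ne_zero
    exact DFunLike.coe_injective.comp Subtype.val_injective
  · exact h.linearIndependent.map' H.toSubmodule.subtype (Submodule.ker_subtype _)
  · refine (hind 0).symm.mono (Submodule.span_le.mpr ?_) (Submodule.span_le.mpr ?_)
    · rintro _ ⟨α, rfl⟩
      exact Submodule.mem_iSup_of_mem _
        (Submodule.mem_iSup_of_mem (LieSubalgebra.isNonZero_coe_root α) (rootVector_mem α))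
    · rintro _ ⟨i, rfl⟩
      exact coe_mem_rootSpace_zero _

variable [CharZero k] [IsKilling k L] [IsTriangularizable k H L]

lemma exists_smul_rootVector_eq (α : H.root) {x : L} (hx : x ∈ rootSpace H α.1) :
    ∃ s : k, s • rootVector H α = x := by
  have hone := finrank_rootSpace_eq_one α.1 (LieSubalgebra.isNonZero_coe_root α)
  obtain ⟨s, hs⟩ := exists_smul_eq_of_finrank_eq_one hone
    (x := (⟨rootVector H α, rootVector_mem α⟩ : rootSpace H α.1))
    (ne_of_apply_ne Subtype.val (rootVector_ne_zero α)) ⟨x, hx⟩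
  exact ⟨s, congrArg Subtype.val hs⟩

lemma exists_lie_rootVector_eq_smul_coroot {α β : H.root} (hβ : (β.1 : H → k) = -α.1) :
    ∃ c : k, c ≠ 0 ∧ ⁅rootVector H β, rootVector H α⁆ = c • (coroot α.1 : L) := by
  have hα := LieSubalgebra.isNonZero_coe_root α
  obtain ⟨h, e, f, ht, he, hf⟩ := exists_isSl2Triple_of_weight_isNonZero hα
  obtain rfl := ht.h_eq_coroot hα he hf
  obtain ⟨s, rfl⟩ := exists_smul_rootVector_eq α he
  obtain ⟨t, rfl⟩ := exists_smul_rootVector_eq β (hβ ▸ hf)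
  have hlie := ht.lie_e_f
  rw [smul_lie, lie_smul, smul_smul, ← lie_skew, smul_neg, ← neg_smul] at hlie
  have hst : -(s * t) ≠ 0 := fun h0 => ht.h_ne_zero (by rw [← hlie, h0, zero_smul])
  exact ⟨(-(s * t))⁻¹, inv_ne_zero hst, by rw [← hlie, inv_smul_smul₀ hst]⟩

lemma top_le_span_rootVector_sumElim :
    ⊤ ≤ Submodule.span k (Set.range (Sum.elim (rootVector H) fun i => (h i : L))) := by
  have hsup := congrArg LieSubmodule.toSubmodule (iSup_genWeightSpace_eq_top' k H L)
  rw [LieSubmodule.iSup_toSubmodule, LieSubmodule.top_toSubmodule] at hsup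
  rw [← hsup]
  refine iSup_le fun χ x hx => ?_
  by_cases hχ : χ.IsZero
  · have hxH : x ∈ H := by
      rw [← LieSubalgebra.mem_toLieSubmodule, ← rootSpace_zero_eq k L H]
      exact hχ.eq ▸ hx
    have hxs : x ∈ (⊤ : Submodule k H).map H.toSubmodule.subtype := ⟨⟨x, hxH⟩, trivial, rfl⟩
    rw [← h.span_eq, Submodule.map_span, ← Set.range_comp] at hxs
    refine Submodule.span_mono (Set.range_subset_iff.mpr fun i => ?_) hxs
    exact ⟨.inr i, rfl⟩
  · obtain ⟨s, rfl⟩ := exists_smul_rootVector_eq ⟨χ, by simpa using hχ⟩ hx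
    exact Submodule.smul_mem _ _ (Submodule.subset_span ⟨.inl _, rfl⟩)

/-- The basis of `L` consisting of root vectors and a basis of the Cartan subalgebra. -/
noncomputable def rootBasis : Basis (H.root ⊕ ι) k L :=
  .mk (linearIndependent_rootVector_sumElim h) (top_le_span_rootVector_sumElim h)

lemma rootBasis_inl (α : H.root) : rootBasis h (.inl α) = rootVector H α :=
  Basis.mk_apply ..

lemma rootBasis_inr (i : ι) : rootBasis h (.inr i) = (h i : L) :=
  Basis.mk_apply ..

/-- The coordinates of a root in the basis dual to `h`. -/
noncomputable def rootCoords (α : H.root) : ι → k :=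
  (h.constr k).symm ((rootSystem H).root α)

lemma exists_root_of_repr_lie_rootVector_ne_zero {α β : H.root} (hβ : (β.1 : H → k) ≠ -α.1)
    {x : H.root ⊕ ι} (hx : (rootBasis h).repr ⁅rootVector H α, rootVector H β⁆ x ≠ 0) :
    ∃ γ : H.root, x = .inl γ ∧ (γ.1 : H → k) = α.1 + β.1 := by
  have hmem : ⁅rootVector H α, rootVector H β⁆ ∈ rootSpace H ((α.1 : H → k) + β.1) :=
    lie_mem_genWeightSpace_of_mem_genWeightSpace (rootVector_mem α) (rootVector_mem β)
  have hne : rootSpace H ((α.1 : H → k) + β.1) ≠ ⊥ := fun hbot => by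
    rw [hbot, LieSubmodule.mem_bot] at hmem
    exact hx (by rw [hmem, map_zero, Finsupp.zero_apply])
  let χ : Weight k H L := ⟨(α.1 : H → k) + β.1, hne⟩
  have hχ : χ.IsNonZero := fun h0 => hβ (neg_eq_of_add_eq_zero_right h0).symm
  let γ : H.root := ⟨χ, by simpa using hχ⟩
  obtain ⟨s, hs⟩ := exists_smul_rootVector_eq γ hmem
  refine ⟨γ, ?_, rfl⟩
  by_contra hne
  rw [← hs, ← rootBasis_inl h, map_smul, Basis.repr_self, Finsupp.smul_apply,
    Finsupp.single_eq_of_ne hne, smul_zero] at hx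
  exact hx rfl

variable (H) in
/-- The opposite of a root. -/
noncomputable def oppositeRoot (α : H.root) : H.root := (rootSystem H).indexNeg.neg α

lemma root_oppositeRoot (α : H.root) :
    (rootSystem H).root (oppositeRoot H α) = -(rootSystem H).root α := by
  rw [← RootPairing.reflection_apply_self]
  exact RootPairing.root_reflectionPerm ..

lemma coroot_oppositeRoot (α : H.root) :
    (rootSystem H).coroot (oppositeRoot H α) = -(rootSystem H).coroot α := by
  rw [← RootPairing.coreflection_apply_self]
  exact RootPairing.coroot_reflectionPerm ..

variable [Fintype ι]

/-- The coordinates of a coroot in the basis `h`. -/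
noncomputable def corootCoords (α : H.root) : ι → k :=
  h.equivFun ((rootSystem H).coroot α)

lemma sum_corootCoords_smul_rootBasis (α : H.root) :
    ∑ i, corootCoords h α i • rootBasis h (.inr i) = (coroot α.1 : L) := by
  have hsum := congrArg H.toSubmodule.subtype (h.sum_equivFun (coroot α.1))
  rw [map_sum] at hsum
  refine Eq.trans (Finset.sum_congr rfl fun i _ => ?_) hsum
  rw [map_smul, rootBasis_inr]
  rfl

lemma corootCoords_ne_smul {α β : H.root} (hβ : β ≠ α) (hβ' : β ≠ oppositeRoot H α) (a : k) :
    corootCoords h β ≠ a • corootCoords h α := by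
  intro hab
  rw [corootCoords, corootCoords, ← map_smul, EmbeddingLike.apply_eq_iff_eq] at hab
  have hind : LinearIndependent k ![(rootSystem H).coroot β, (rootSystem H).coroot α] := by
    refine RootPairing.IsReduced.linearIndependent (P := (rootSystem H).flip) hβ fun heq => ?_
    refine hβ' ((rootSystem H).coroot.injective ?_)
    rw [coroot_oppositeRoot]
    exact heq
  refine one_ne_zero (LinearIndependent.pair_iff.mp hind 1 (-a) ?_).1
  rw [hab, one_smul, neg_smul, add_neg_cancel]

theorem exists_isRootBasis :
    ∃ c, IsRootBasis (rootBasis h) (rootCoords h) (corootCoords h) (oppositeRoot H) c := by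
  have hneg (α : H.root) : ((oppositeRoot H α).1 : H → k) = -α.1 :=
    funext fun x => LinearMap.congr_fun (root_oppositeRoot α) x
  choose c hc hlie using fun α => exists_lie_rootVector_eq_smul_coroot (hneg α)
  exact ⟨c, {
    neg_neg := (rootSystem H).indexNeg.neg_neg
    neg_ne := fun α => (RootPairing.ne_neg _ α).symm
    root_neg := fun α => by rw [rootCoords, root_oppositeRoot, map_neg, rootCoords]
    lie_inr_inr := fun i j => by
      rw [rootBasis_inr, rootBasis_inr, ← LieSubalgebra.coe_bracket, trivial_lie_zero,
        ZeroMemClass.coe_zero]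
    lie_inr_inl := fun i α => by
      rw [rootBasis_inr, rootBasis_inl]
      exact lie_eq_smul_of_mem_rootSpace (rootVector_mem α) _
    scalar_ne_zero := hc
    lie_neg_self := fun α => by
      rw [sum_corootCoords_smul_rootBasis, rootBasis_inl, rootBasis_inl, hlie]
    exists_root_of_repr_lie_ne_zero := fun α β hβ x hx => by
      rw [rootBasis_inl, rootBasis_inl] at hx
      have hβ' : (β.1 : H → k) ≠ -α.1 := fun heq =>
        hβ (Subtype.ext (DFunLike.coe_injective (heq.trans (hneg α).symm)))
      obtain ⟨γ, rfl, hγ⟩ := exists_root_of_repr_lie_rootVector_ne_zero h hβ' hx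
      refine ⟨γ, rfl, ?_⟩
      rw [rootCoords, rootCoords, rootCoords, ← map_add]
      exact congrArg _ (LinearMap.ext (congrFun hγ))
    root_dotProduct_coroot := fun α => by
      rw [rootCoords, corootCoords, constr_symm_dotProduct_equivFun]
      exact root_apply_coroot (LieSubalgebra.isNonZero_coe_root α)
    coroot_ne_smul := fun α β => corootCoords_ne_smul h
    root_ne_two_smul := fun α β heq => by
      rw [rootCoords, rootCoords, ← map_smul, EmbeddingLike.apply_eq_iff_eq] at heq
      have := IsAddTorsionFree.of_isTorsionFree k (Dual k H)
      refine RootPairing.nsmul_notMem_range_root (P := rootSystem H) (i := α) (n := 2) ⟨β, ?_⟩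
      rw [heq, two_smul, two_nsmul] }⟩

lemma finite_reflectionMonoid_rootCoords :
    Finite (reflectionMonoid (rootCoords h) (corootCoords h)) := by
  refine finite_reflectionMonoid (fun α β => (rootSystem H).reflectionPerm α β)
    (fun α β => ?_) ?_
  · rw [corootCoords, corootCoords, rootCoords, constr_symm_dotProduct_equivFun, corootCoords,
      RootPairing.coroot_reflectionPerm, RootPairing.coreflection_apply, map_sub, map_smul]
    rfl
  · have hspan := congrArg (Submodule.map h.equivFun.toLinearMap)
      (RootPairing.IsRootSystem.span_coroot_eq_top (P := rootSystem H))
    rwa [Submodule.map_span, Submodule.map_top, LinearEquiv.range, ← Set.range_comp] at hspan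

end CartanSubalgebra

end KostantFreeness

theorem enveloping_algebra_free_over_center_general (k L : Type*) [Field k] [CharZero k]
    [LieRing L] [LieAlgebra k L] [FiniteDimensional k L] [LieAlgebra.IsKilling k L]
    (H : LieSubalgebra k L) [H.IsCartanSubalgebra] [LieModule.IsTriangularizable k H L] :
    Module.Free (Subalgebra.center k (UniversalEnvelopingAlgebra k L))
      (UniversalEnvelopingAlgebra k L) := by
  let h := Module.finBasis k H
  obtain ⟨c, hc⟩ := KostantFreeness.exists_isRootBasis h
  have := KostantFreeness.finite_reflectionMonoid_rootCoords h
  refine hc.free_center (KostantFreeness.envelopingSymmetrization_injective _ fun x hx => ?_)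
  have hx : x ∈ LieAlgebra.center k L := fun y => by rw [← lie_skew, hx, neg_zero]
  rwa [LieAlgebra.center_eq_bot, LieSubmodule.mem_bot] at hx

/-- Kostant's freeness theorem: for a finite-dimensional semisimple Lie algebra `𝔤` over
an algebraically closed field of characteristic zero, the universal enveloping algebra
`U(𝔤)` is free (in particular flat) as a module over its center `Z(𝔤)`. -/
theorem enveloping_algebra_free_over_center
    (k L : Type*) [Field k] [CharZero k] [IsAlgClosed k]
    [LieRing L] [LieAlgebra k L] [FiniteDimensional k L] [LieAlgebra.IsSemisimple k L] :
    Module.Free (Subalgebra.center k (UniversalEnvelopingAlgebra k L))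
      (UniversalEnvelopingAlgebra k L) := by
  have : Infinite k := IsAlgClosed.instInfinite
  obtain ⟨x, hx⟩ := LieAlgebra.exists_isCartanSubalgebra_engel k L
  exact enveloping_algebra_free_over_center_general k L (LieSubalgebra.engel k x)
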